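/- arXiv:2411.15107 — 2 statements merged into one kernel-verified Lean document; each statement's English description precedes it below -/
import Mathlib

section
/- Let M be a complete pointed metric space. If every point x ∈ M has a neighborhood U such that the Lipschitz-free space F(cl(U) ∪ {0}) has property (V*), then F(M) has property (V*). In other words, property (V*) is locally determined for Lipschitz-free spaces. -/
open Filter Topology Metric Set

noncomputable section

/-- A formal series `∑ yₙ` in a normed space `Y` is weakly unconditionally Cauchy (WUC)
if `∑ |⟨φ, yₙ⟩| < ∞` for every continuous linear functional `φ` on `Y`. -/
def IsWUC {Y : Type*} [SeminormedAddCommGroup Y] [NormedSpace ℝ Y] (y : ℕ → Y) : Prop :=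
  ∀ φ : Y →L[ℝ] ℝ, Summable fun n => |φ (y n)|

/-- `Γ` is a (V*)-set in `X`: for every WUC series `∑ fₙ` in the dual `X*`,
`sup_{x ∈ Γ} |⟨x, fₙ⟩| → 0`. -/
def IsVStarSet {X : Type*} [SeminormedAddCommGroup X] [NormedSpace ℝ X] (Γ : Set X) : Prop :=
  ∀ f : ℕ → (X →L[ℝ] ℝ), IsWUC f →
    ∀ ε > (0 : ℝ), ∀ᶠ n in atTop, ∀ x ∈ Γ, |f n x| ≤ ε

/-- `Γ` is relatively weakly compact: its closure in the weak topology is compact. -/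
def RelWeaklyCompact {X : Type*} [SeminormedAddCommGroup X] [NormedSpace ℝ X]
    (Γ : Set X) : Prop :=
  IsCompact (closure ((toWeakSpace ℝ X) '' Γ))

/-- A normed space has Pełczyński's property (V*) if every (V*)-set is relatively
weakly compact. -/
def HasPropertyVStar (X : Type*) [SeminormedAddCommGroup X] [NormedSpace ℝ X] : Prop :=
  ∀ Γ : Set X, IsVStarSet Γ → RelWeaklyCompact Γ

/-- `F`, together with the map `δ : M → F`, is (a realization of) the Lipschitz-free space
over the pointed metric space `(M, o)`: `δ` is a base-point-preserving isometric embedding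
whose range has dense linear span, and every Lipschitz function `f : M → ℝ` vanishing at
the base point lifts to a continuous linear functional of norm at most `Lip(f)` (this
characterizes `F(M)`, with dual `Lip₀(M)`, up to isometric isomorphism). -/
structure IsLipschitzFree {M : Type*} [MetricSpace M] (o : M)
    {F : Type*} [NormedAddCommGroup F] [NormedSpace ℝ F] (δ : M → F) : Prop where
  isometry : Isometry δ
  map_base : δ o = 0
  dense_span : Dense (Submodule.span ℝ (Set.range δ) : Set F)
  lift : ∀ (L : NNReal) (f : M → ℝ), LipschitzWith L f → f o = 0 →
    ∃ φ : F →L[ℝ] ℝ, ‖φ‖ ≤ L ∧ ∀ x, φ (δ x) = f x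

/-- The subspace of `F` corresponding to the Lipschitz-free space `F(S)` over a subset
`S ⊆ M`: the closed linear span of `δ(S)`. -/
def freeSpan {M : Type*} [MetricSpace M] {F : Type*} [NormedAddCommGroup F]
    [NormedSpace ℝ F] (δ : M → F) (S : Set M) : Submodule ℝ F :=
  (Submodule.span ℝ (δ '' S)).topologicalClosure

theorem mem_freeSpan {M : Type*} [MetricSpace M] {F : Type*} [NormedAddCommGroup F]
    [NormedSpace ℝ F] (δ : M → F) {S : Set M} {x : M} (hx : x ∈ S) :
    δ x ∈ freeSpan δ S :=
  (Submodule.span ℝ (δ '' S)).le_topologicalClosure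
    (Submodule.subset_span ⟨x, hx, rfl⟩)

/-! By Grothendieck's criterion it suffices to approximate a (V*)-set `Γ` up to every `ε` by a
relatively weakly compact set. If no cutoff near a finite set were within `ε` of the identity on it,
then a gliding hump would produce bounded functionals with disjoint supports that are large on `Γ`;
such functionals form a WUC series, which is impossible. Iterating at smaller and smaller scales
gives multipliers `P k` within `ε` of the identity on `Γ` whose supports decrease along a totally
bounded filter. Since `M` is complete, a member of this filter is covered by finitely many
neighbourhoods with property (V*). The cutoffs near two such neighbourhoods combine to
`s + t * (1 - s)`, so a finite combination `S` of them is `1` on the support of some `P k`, and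
`P k = S ∘ P k` maps `Γ` to a relatively weakly compact set. -/

section WeaklyUnconditionallyCauchy

variable {X Y : Type*} [SeminormedAddCommGroup X] [NormedSpace ℝ X]
  [SeminormedAddCommGroup Y] [NormedSpace ℝ Y]

theorem IsWUC.map {y : ℕ → X} (hy : IsWUC y) (T : X →L[ℝ] Y) : IsWUC fun n => T (y n) :=
  fun φ => hy (φ.comp T)

theorem IsWUC.of_norm_sum_le {y : ℕ → X} {C : ℝ}
    (h : ∀ (s : Finset ℕ) (a : ℕ → ℝ), (∀ n, |a n| ≤ 1) → ‖∑ n ∈ s, a n • y n‖ ≤ C) :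
    IsWUC y := by
  intro φ
  refine summable_of_sum_le (c := ‖φ‖ * C) (fun n => abs_nonneg _) fun s => ?_
  have hsign : ∀ n, |(SignType.sign (φ (y n)) : ℝ)| ≤ 1 := fun n => by
    rcases lt_trichotomy (φ (y n)) 0 with h | h | h <;> simp [h]
  calc ∑ n ∈ s, |φ (y n)| = φ (∑ n ∈ s, (SignType.sign (φ (y n)) : ℝ) • y n) := by
        simp [map_sum]
    _ ≤ ‖φ (∑ n ∈ s, (SignType.sign (φ (y n)) : ℝ) • y n)‖ := Real.le_norm_self _
    _ ≤ ‖φ‖ * C := φ.le_opNorm_of_le (h s _ hsign)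

theorem IsVStarSet.image {Γ : Set X} (hΓ : IsVStarSet Γ) (T : X →L[ℝ] Y) :
    IsVStarSet (T '' Γ) := by
  intro f hf ε hε
  have hfT : IsWUC fun n => (f n).comp T := hf.map ((ContinuousLinearMap.compL ℝ X Y ℝ).flip T)
  filter_upwards [hΓ _ hfT ε hε] with n hn
  rintro _ ⟨x, hx, rfl⟩
  exact hn x hx

end WeaklyUnconditionallyCauchy

section RelWeaklyCompact

open scoped Pointwise

variable {X Y : Type*} [SeminormedAddCommGroup X] [NormedSpace ℝ X]
  [SeminormedAddCommGroup Y] [NormedSpace ℝ Y] {A B : Set X}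

theorem RelWeaklyCompact.singleton (x : X) : RelWeaklyCompact {x} := by
  rw [RelWeaklyCompact, image_singleton]
  exact isCompact_singleton.closure

theorem RelWeaklyCompact.mono (hB : RelWeaklyCompact B) (h : A ⊆ B) : RelWeaklyCompact A :=
  IsCompact.closure_of_subset hB ((image_mono h).trans subset_closure)

theorem RelWeaklyCompact.image (hA : RelWeaklyCompact A) (T : X →L[ℝ] Y) :
    RelWeaklyCompact (T '' A) := by
  refine (IsCompact.image hA (WeakSpace.map T).continuous).closure_of_subset ?_
  rintro _ ⟨_, ⟨x, hx, rfl⟩, rfl⟩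
  exact ⟨toWeakSpace ℝ X x, subset_closure (mem_image_of_mem _ hx), rfl⟩

theorem RelWeaklyCompact.add (hA : RelWeaklyCompact A) (hB : RelWeaklyCompact B) :
    RelWeaklyCompact (A + B) := by
  refine (IsCompact.add hA hB).closure_of_subset ?_
  rw [image_add]
  exact add_subset_add subset_closure subset_closure

open NormedSpace

theorem isClosed_range_inclusionInDoubleDualLi (X : Type*) [NormedAddCommGroup X]
    [NormedSpace ℝ X] [CompleteSpace X] :
    IsClosed (range (inclusionInDoubleDualLi (E := X) ℝ)) := by
  have hcomplete := (inclusionInDoubleDualLi (E := X) ℝ).isometry.isUniformInducing.isComplete_range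
  exact hcomplete.isClosed

theorem isCompact_image_add_closedBall {W : Set X} (hW : RelWeaklyCompact W) (ε : ℝ) :
    IsCompact (inclusionInDoubleDualWeak ℝ X '' closure (toWeakSpace ℝ X '' W) +
      WeakDual.toStrongDual ⁻¹' closedBall 0 ε) :=
  (IsCompact.image hW (inclusionInDoubleDualWeak ℝ X).continuous).add
    (WeakDual.isCompact_closedBall 0 ε)

theorem closure_image_subset_image_add_closedBall {C W : Set X} {ε : ℝ}
    (hW : RelWeaklyCompact W) (hCW : ∀ x ∈ C, ∃ y ∈ W, ‖x - y‖ ≤ ε) :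
    closure (inclusionInDoubleDualWeak ℝ X '' (toWeakSpace ℝ X '' C)) ⊆
      inclusionInDoubleDualWeak ℝ X '' closure (toWeakSpace ℝ X '' W) +
        WeakDual.toStrongDual ⁻¹' closedBall 0 ε := by
  refine closure_minimal ?_ (isCompact_image_add_closedBall hW ε).isClosed
  rintro _ ⟨_, ⟨x, hx, rfl⟩, rfl⟩
  obtain ⟨y, hy, hxy⟩ := hCW x hx
  refine ⟨_, mem_image_of_mem _ (subset_closure (mem_image_of_mem _ hy)),
    inclusionInDoubleDualWeak ℝ X (toWeakSpace ℝ X (x - y)), ?_, by simp⟩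
  exact (mem_closedBall_zero_iff (a := inclusionInDoubleDual ℝ X (x - y))).2
    ((double_dual_bound ℝ X (x - y)).trans hxy)

/- Grothendieck's criterion. The weak* closure of `C` in the bidual lies in `W + ε B**` for every
`ε`, hence in the norm closure of `X`, which is `X` itself by completeness. -/
theorem RelWeaklyCompact.of_forall_exists_norm_sub_le {X : Type*} [NormedAddCommGroup X]
    [NormedSpace ℝ X] [CompleteSpace X] {C : Set X}
    (h : ∀ ε > (0 : ℝ), ∃ W : Set X, RelWeaklyCompact W ∧ ∀ x ∈ C, ∃ y ∈ W, ‖x - y‖ ≤ ε) :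
    RelWeaklyCompact C := by
  have hJ := isEmbedding_inclusionInDoubleDualWeak ℝ X
  have hrange : closure (inclusionInDoubleDualWeak ℝ X '' (toWeakSpace ℝ X '' C)) ⊆
      range (inclusionInDoubleDualWeak ℝ X) := by
    intro z hz
    have hmem : WeakDual.toStrongDual z ∈
        closure (range (inclusionInDoubleDualLi (E := X) ℝ)) := by
      refine (SeminormedAddCommGroup.mem_closure_iff
        (E := StrongDual ℝ (StrongDual ℝ X))).2 fun ε hε => ?_
      obtain ⟨W, hW, hCW⟩ := h (ε / 2) (half_pos hε)
      obtain ⟨_, ⟨w, -, rfl⟩, b, hb, rfl⟩ := closure_image_subset_image_add_closedBall hW hCW hz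
      refine ⟨_, mem_range_self ((toWeakSpace ℝ X).symm w), ?_⟩
      calc ‖inclusionInDoubleDualLi (E := X) ℝ ((toWeakSpace ℝ X).symm w) +
            WeakDual.toStrongDual b - inclusionInDoubleDualLi (E := X) ℝ ((toWeakSpace ℝ X).symm w)‖
          = ‖WeakDual.toStrongDual b‖ := by rw [add_sub_cancel_left]
        _ ≤ ε / 2 := (mem_closedBall_zero_iff (a := WeakDual.toStrongDual b)).1 hb
        _ < ε := half_lt_self hε
    obtain ⟨x, hx⟩ := (isClosed_range_inclusionInDoubleDualLi X).closure_subset hmem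
    exact ⟨toWeakSpace ℝ X x, hx⟩
  obtain ⟨W, hW, hCW⟩ := h 1 one_pos
  rw [RelWeaklyCompact, hJ.closure_eq_preimage_closure_image]
  exact hJ.isCompact_preimage' ((isCompact_image_add_closedBall hW 1).of_isClosed_subset
    isClosed_closure (closure_image_subset_image_add_closedBall hW hCW)) hrange

end RelWeaklyCompact

section MapsVStarToWeaklyCompact

open scoped Pointwise

variable {X Y Z : Type*} [SeminormedAddCommGroup X] [NormedSpace ℝ X]
  [SeminormedAddCommGroup Y] [NormedSpace ℝ Y] [SeminormedAddCommGroup Z] [NormedSpace ℝ Z]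

/-- The operators mapping every (V*)-set to a relatively weakly compact set, an operator version of
property (V*): `X` has property (V*) exactly when the identity of `X` is such an operator. -/
def MapsVStarToWeaklyCompact (T : X →L[ℝ] Y) : Prop :=
  ∀ Γ : Set X, IsVStarSet Γ → RelWeaklyCompact (T '' Γ)

theorem MapsVStarToWeaklyCompact.zero : MapsVStarToWeaklyCompact (0 : X →L[ℝ] Y) := fun Γ _ =>
  (RelWeaklyCompact.singleton 0).mono (by rintro _ ⟨x, -, rfl⟩; rfl)

theorem MapsVStarToWeaklyCompact.add {S T : X →L[ℝ] Y} (hS : MapsVStarToWeaklyCompact S)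
    (hT : MapsVStarToWeaklyCompact T) : MapsVStarToWeaklyCompact (S + T) := fun Γ hΓ =>
  ((hS Γ hΓ).add (hT Γ hΓ)).mono <| by
    rintro _ ⟨x, hx, rfl⟩
    exact add_mem_add (mem_image_of_mem S hx) (mem_image_of_mem T hx)

theorem MapsVStarToWeaklyCompact.comp {T : Y →L[ℝ] Z} (hT : MapsVStarToWeaklyCompact T)
    (S : X →L[ℝ] Y) : MapsVStarToWeaklyCompact (T.comp S) := fun Γ hΓ => by
  rw [ContinuousLinearMap.coe_comp, image_comp]
  exact hT _ (hΓ.image S)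

theorem HasPropertyVStar.mapsVStarToWeaklyCompact {V : Submodule ℝ Y} (hV : HasPropertyVStar V)
    {T : X →L[ℝ] Y} (hT : ∀ x, T x ∈ V) : MapsVStarToWeaklyCompact T := fun Γ hΓ => by
  have hcod := (hV _ (hΓ.image (T.codRestrict V hT))).image V.subtypeL
  rwa [← image_comp] at hcod

end MapsVStarToWeaklyCompact

section TotallyBounded

theorem exists_mem_of_totallyBounded {α : Type*} [UniformSpace α] [CompleteSpace α]
    {f : Filter α} (hf : f.TotallyBounded) {p : Set α → Prop} (hempty : p ∅)
    (hmono : ∀ t, p t → ∀ s ⊆ t, p s) (hunion : ∀ s, p s → ∀ t, p t → p (s ∪ t))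
    (hnhds : ∀ x, ∃ V ∈ 𝓝 x, p V) : ∃ s ∈ f, p s := by
  by_contra! hnot
  let g : Filter α := f ⊓ comk p hempty hmono hunion
  have hne : NeBot g := by
    rw [inf_neBot_iff]
    rintro s hs t ht
    by_contra hdisj
    exact hnot s hs (hmono _ (mem_comk.1 ht) s fun x hx hxt => hdisj ⟨x, hx, hxt⟩)
  obtain ⟨x, hx⟩ := (hf.mono inf_le_left : g.TotallyBounded).exists_clusterPt
  obtain ⟨V, hV, hpV⟩ := hnhds x
  have hVc : Vᶜ ∈ g := mem_inf_of_right (by rwa [mem_comk, compl_compl])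
  obtain ⟨y, hyV, hyVc⟩ := clusterPt_iff_nonempty.1 hx hV hVc
  exact hyVc hyV

end TotallyBounded

section LipschitzFree

variable {M : Type*} [MetricSpace M] {o : M}
  {F : Type*} [NormedAddCommGroup F] [NormedSpace ℝ F] {δ : M → F}

theorem IsLipschitzFree.norm_apply (hδ : IsLipschitzFree o δ) (x : M) : ‖δ x‖ = dist x o := by
  rw [← hδ.isometry.dist_eq, hδ.map_base, dist_zero_right]

theorem IsLipschitzFree.norm_sub (hδ : IsLipschitzFree o δ) (x y : M) :
    ‖δ x - δ y‖ = dist x y := by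
  rw [← dist_eq_norm, hδ.isometry.dist_eq]

theorem IsLipschitzFree.ext (hδ : IsLipschitzFree o δ) {E : Type*} [NormedAddCommGroup E]
    [NormedSpace ℝ E] {S T : F →L[ℝ] E} (h : ∀ x, S (δ x) = T (δ x)) : S = T :=
  ContinuousLinearMap.ext_on hδ.dense_span (by rintro _ ⟨x, rfl⟩; exact h x)

theorem IsLipschitzFree.norm_linearCombination_le (hδ : IsLipschitzFree o δ) {E : Type*}
    [NormedAddCommGroup E] [NormedSpace ℝ E] {L : NNReal} {g : M → E} (hg : LipschitzWith L g)
    (hgo : g o = 0) (c : M →₀ ℝ) :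
    ‖Finsupp.linearCombination ℝ g c‖ ≤ L * ‖Finsupp.linearCombination ℝ δ c‖ := by
  obtain ⟨φ, hφ, hφc⟩ := exists_dual_vector'' ℝ (Finsupp.linearCombination ℝ g c)
  have hφg : LipschitzWith L (φ ∘ g) :=
    ((φ.lipschitz.weaken hφ).comp hg).weaken (one_mul L).le
  obtain ⟨ψ, hψ, hψδ⟩ := hδ.lift L (φ ∘ g) hφg (by simp [hgo])
  have hφψ : φ (Finsupp.linearCombination ℝ g c) = ψ (Finsupp.linearCombination ℝ δ c) := by
    simp only [Finsupp.linearCombination_apply, Finsupp.sum, map_sum, map_smul, hψδ,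
      Function.comp_apply]
  calc ‖Finsupp.linearCombination ℝ g c‖ = ψ (Finsupp.linearCombination ℝ δ c) := by
        rw [← hφψ, hφc]; rfl
    _ ≤ ‖ψ (Finsupp.linearCombination ℝ δ c)‖ := Real.le_norm_self _
    _ ≤ L * ‖Finsupp.linearCombination ℝ δ c‖ := ψ.le_of_opNorm_le hψ _

theorem IsLipschitzFree.exists_extension (hδ : IsLipschitzFree o δ) {E : Type*}
    [NormedAddCommGroup E] [NormedSpace ℝ E] [CompleteSpace E] {L : NNReal} {g : M → E}
    (hg : LipschitzWith L g) (hgo : g o = 0) : ∃ T : F →L[ℝ] E, ‖T‖ ≤ L ∧ ∀ x, T (δ x) = g x := by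
  have hdense : DenseRange (Finsupp.linearCombination ℝ δ) := by
    rw [DenseRange, ← LinearMap.coe_range, Finsupp.range_linearCombination]
    exact hδ.dense_span
  have hbound := hδ.norm_linearCombination_le hg hgo
  refine ⟨(Finsupp.linearCombination ℝ g).extendOfNorm (Finsupp.linearCombination ℝ δ),
    LinearMap.opNorm_extendOfNorm_le hdense L.2 hbound, fun x => ?_⟩
  simpa using LinearMap.extendOfNorm_eq hdense ⟨_, hbound⟩ (Finsupp.single x 1)

theorem IsLipschitzFree.opNorm_le (hδ : IsLipschitzFree o δ) (φ : F →L[ℝ] ℝ) {L : ℝ}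
    (hL : 0 ≤ L) (h : ∀ x y, |φ (δ x) - φ (δ y)| ≤ L * dist x y) : ‖φ‖ ≤ L := by
  obtain ⟨ψ, hψ, hψδ⟩ := hδ.lift ⟨L, hL⟩ (fun x => φ (δ x)) (.of_dist_le_mul h)
    (by rw [hδ.map_base, map_zero])
  rwa [hδ.ext fun x => (hψδ x).symm]

end LipschitzFree

section DisjointSupports

theorem sum_abs_sub_le_of_pairwise_eq_zero {ι : Type*} (s : Finset ι) {u v : ι → ℝ} {D : ℝ}
    (hu : Pairwise fun m n => u m = 0 ∨ u n = 0) (hv : Pairwise fun m n => v m = 0 ∨ v n = 0)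
    (hD : ∀ n, |u n - v n| ≤ D) (hD0 : 0 ≤ D) : ∑ n ∈ s, |u n - v n| ≤ 2 * D := by
  classical
  have hcard : ∀ w : ι → ℝ, (Pairwise fun m n => w m = 0 ∨ w n = 0) →
      (s.filter (w · ≠ 0)).card ≤ 1 := fun w hw => Finset.card_le_one.2 fun m hm n hn => by
    by_contra hmn
    exact (hw hmn).elim (Finset.mem_filter.1 hm).2 (Finset.mem_filter.1 hn).2
  have hsub : s.filter (fun n => |u n - v n| ≠ 0) ⊆ s.filter (u · ≠ 0) ∪ s.filter (v · ≠ 0) := by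
    intro n
    simp only [Finset.mem_filter, Finset.mem_union]
    grind
  calc ∑ n ∈ s, |u n - v n| = ∑ n ∈ s.filter (fun n => |u n - v n| ≠ 0), |u n - v n| :=
        (Finset.sum_filter_ne_zero s).symm
    _ ≤ (s.filter fun n => |u n - v n| ≠ 0).card • D :=
        Finset.sum_le_card_nsmul _ _ _ fun n _ => hD n
    _ ≤ 2 • D := nsmul_le_nsmul_left hD0 <| (Finset.card_le_card hsub).trans <|
        (Finset.card_union_le _ _).trans (add_le_add (hcard u hu) (hcard v hv))
    _ = 2 * D := two_nsmul D |>.trans (two_mul D).symm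

variable {M : Type*} [MetricSpace M] {o : M}
  {F : Type*} [NormedAddCommGroup F] [NormedSpace ℝ F] {δ : M → F}

theorem IsLipschitzFree.isWUC_of_pairwise_disjoint (hδ : IsLipschitzFree o δ)
    {g : ℕ → F →L[ℝ] ℝ} {C : ℝ} (hC : ∀ n, ‖g n‖ ≤ C)
    (hdisj : Pairwise fun m n => ∀ x, g m (δ x) = 0 ∨ g n (δ x) = 0) : IsWUC g := by
  have hC0 : 0 ≤ C := (norm_nonneg _).trans (hC 0)
  refine .of_norm_sum_le (C := 2 * C) fun s a ha => hδ.opNorm_le _ (by positivity) fun x y => ?_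
  have hpair : ∀ z, Pairwise fun m n => a m * g m (δ z) = 0 ∨ a n * g n (δ z) = 0 :=
    fun z m n hmn => (hdisj hmn z).imp (by simp +contextual) (by simp +contextual)
  have hterm : ∀ n, |a n * g n (δ x) - a n * g n (δ y)| ≤ C * dist x y := fun n => by
    have hg := (g n).le_of_opNorm_le (hC n) (δ x - δ y)
    rw [hδ.norm_sub, map_sub, Real.norm_eq_abs] at hg
    rw [← mul_sub, abs_mul]
    exact (mul_le_of_le_one_left (abs_nonneg _) (ha n)).trans hg
  calc |(∑ n ∈ s, a n • g n) (δ x) - (∑ n ∈ s, a n • g n) (δ y)|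
      = |∑ n ∈ s, (a n * g n (δ x) - a n * g n (δ y))| := by simp
    _ ≤ ∑ n ∈ s, |a n * g n (δ x) - a n * g n (δ y)| := Finset.abs_sum_le_sum_abs _ _
    _ ≤ 2 * (C * dist x y) :=
        sum_abs_sub_le_of_pairwise_eq_zero s (hpair x) (hpair y) hterm (by positivity)
    _ = 2 * C * dist x y := (mul_assoc _ _ _).symm

end DisjointSupports

section Multiplier

variable {M : Type*} {F : Type*} [NormedAddCommGroup F] [NormedSpace ℝ F] {δ : M → F}
  {S T : F →L[ℝ] F} {g h : M → ℝ}

/-- `T` is the multiplier with symbol `h`: when `δ` realizes a Lipschitz-free space, the preadjoint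
of the operator `f ↦ h * f` on Lipschitz functions. -/
def IsMultiplier (δ : M → F) (T : F →L[ℝ] F) (h : M → ℝ) : Prop :=
  ∀ x, T (δ x) = h x • δ x

namespace IsMultiplier

theorem zero : IsMultiplier δ 0 0 := fun x => by simp

theorem id : IsMultiplier δ (.id ℝ F) 1 := fun x => by simp

theorem add (hS : IsMultiplier δ S g) (hT : IsMultiplier δ T h) :
    IsMultiplier δ (S + T) (g + h) := fun x => by
  rw [add_apply, hS, hT, Pi.add_apply, add_smul]

theorem sub (hS : IsMultiplier δ S g) (hT : IsMultiplier δ T h) :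
    IsMultiplier δ (S - T) (g - h) := fun x => by
  rw [sub_apply, hS, hT, Pi.sub_apply, sub_smul]

theorem comp (hS : IsMultiplier δ S g) (hT : IsMultiplier δ T h) :
    IsMultiplier δ (S.comp T) (g * h) := fun x => by
  rw [ContinuousLinearMap.comp_apply, hT, map_smul, hS, smul_smul, mul_comm, Pi.mul_apply]

variable [MetricSpace M] {o : M}

theorem unique (hδ : IsLipschitzFree o δ) (hS : IsMultiplier δ S h) (hT : IsMultiplier δ T h) :
    S = T :=
  hδ.ext fun x => (hS x).trans (hT x).symm

theorem mem_freeSpan (hδ : IsLipschitzFree o δ) (hT : IsMultiplier δ T h) {A : Set M}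
    (hA : Function.support h ⊆ A) (μ : F) : T μ ∈ freeSpan δ A := by
  have hspan : Submodule.span ℝ (range δ) ≤ (freeSpan δ A).comap T.toLinearMap := by
    rw [Submodule.span_le]
    rintro _ ⟨x, rfl⟩
    by_cases hx : x ∈ A
    · simpa [hT x] using Submodule.smul_mem _ _ (_root_.mem_freeSpan δ hx)
    · simp [hT x, Function.notMem_support.1 fun hxh => hx (hA hxh)]
  have hclosed : IsClosed (T ⁻¹' (freeSpan δ A : Set F)) :=
    (Submodule.isClosed_topologicalClosure _).preimage T.continuous
  exact closure_minimal hspan hclosed (hδ.dense_span μ)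

theorem exists_finite_mem_nhds (hδ : IsLipschitzFree o δ) {μ : F} {U : Set F} (hU : U ∈ 𝓝 μ)
    {K : ℝ} (hK : 0 ≤ K) : ∃ B : Set M, B.Finite ∧ ∀ T h, IsMultiplier δ T h → ‖T‖ ≤ K →
      EqOn h 1 B → T μ ∈ U := by
  obtain ⟨r, hr, hrU⟩ := Metric.mem_nhds_iff.1 hU
  obtain ⟨ν, hν, hμν⟩ := hδ.dense_span.exists_dist_lt μ (show 0 < r / (K + 1) by positivity)
  obtain ⟨c, rfl⟩ := Finsupp.mem_span_range_iff_exists_finsupp.1 hν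
  refine ⟨c.support, c.support.finite_toSet, fun T h hT hTK hB => hrU ?_⟩
  set ν := c.sum fun x a => a • δ x
  have hTν : T ν = ν := by
    simp only [ν, Finsupp.sum, map_sum, map_smul]
    exact Finset.sum_congr rfl fun x hx => by rw [hT, hB hx, Pi.one_apply, one_smul]
  calc dist (T μ) μ ≤ dist (T μ) (T ν) + dist ν μ := by
        rw [hTν]; exact dist_triangle _ _ _
    _ ≤ K * dist μ ν + dist μ ν := by
        rw [dist_eq_norm, ← map_sub, dist_comm ν, dist_eq_norm μ]
        gcongr
        exact T.le_of_opNorm_le hTK _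
    _ = (K + 1) * dist μ ν := by ring
    _ < r := by rwa [lt_div_iff₀' (by positivity)] at hμν

end IsMultiplier

theorem IsLipschitzFree.exists_isMultiplier [MetricSpace M] [CompleteSpace F] {o : M}
    (hδ : IsLipschitzFree o δ) {B C : ℝ} (hB : ∀ x, |h x| ≤ B) (hC0 : 0 ≤ C)
    (hC : ∀ x y, |h x - h y| * dist x o ≤ C * dist x y) :
    ∃ T, IsMultiplier δ T h ∧ ‖T‖ ≤ B + C := by
  have hB0 : 0 ≤ B := (abs_nonneg _).trans (hB o)
  have hlip : LipschitzWith ⟨B + C, add_nonneg hB0 hC0⟩ fun x => h x • δ x :=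
    .of_dist_le_mul fun x y => by
      calc dist (h x • δ x) (h y • δ y) = ‖h y • (δ x - δ y) + (h x - h y) • δ x‖ := by
            rw [dist_eq_norm]; congr 1; module
        _ ≤ |h y| * dist x y + |h x - h y| * dist x o := by
            refine (norm_add_le _ _).trans_eq ?_
            rw [norm_smul, norm_smul, hδ.norm_apply, hδ.norm_sub, Real.norm_eq_abs,
              Real.norm_eq_abs]
        _ ≤ B * dist x y + C * dist x y :=
            add_le_add (mul_le_mul_of_nonneg_right (hB y) dist_nonneg) (hC x y)
        _ = (B + C) * dist x y := (add_mul _ _ _).symm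
  obtain ⟨T, hTnorm, hT⟩ := hδ.exists_extension hlip (by rw [hδ.map_base, smul_zero])
  exact ⟨T, hT, hTnorm⟩

end Multiplier

section Cutoff

variable {M : Type*} [MetricSpace M] {o x : M} {A B : Set M} {s : ℝ}

/-- The distance to `A` divided by `1 + d(·, o)`. Dividing makes its variation at `x` of order
`1 / d(x, o)`, which is what symbols of multipliers allow. -/
def weightedInfDist (o : M) (A : Set M) (x : M) : ℝ :=
  infDist x A / (1 + dist x o)

theorem weightedInfDist_of_mem (h : x ∈ A) : weightedInfDist o A x = 0 := by
  rw [weightedInfDist, infDist_zero_of_mem h, zero_div]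

theorem weightedInfDist_anti (hA : A.Nonempty) (h : A ⊆ B) :
    weightedInfDist o B x ≤ weightedInfDist o A x :=
  div_le_div_of_nonneg_right (infDist_le_infDist_of_subset h hA) (by positivity)

theorem weightedInfDist_le_infDist : weightedInfDist o A x ≤ infDist x A :=
  div_le_self infDist_nonneg (le_add_of_nonneg_right dist_nonneg)

theorem exists_dist_lt_of_weightedInfDist_lt (hA : A.Nonempty) (h : weightedInfDist o A x < s) :
    ∃ a ∈ A, dist x a < s * (1 + dist x o) := by
  rw [weightedInfDist, div_lt_iff₀ (by positivity)] at h
  exact (infDist_lt_iff hA).1 h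

theorem exists_dist_lt_of_weightedInfDist_lt_of_le_half (hA : A.Nonempty)
    (h : weightedInfDist o A x < s) (hs : s ≤ 1 / 2) :
    ∃ a ∈ A, dist x a < 2 * s * (1 + dist a o) := by
  obtain ⟨a, ha, hxa⟩ := exists_dist_lt_of_weightedInfDist_lt hA h
  have hs0 : 0 < s := pos_of_mul_pos_left (dist_nonneg.trans_lt hxa) (by positivity)
  have hxo : s * dist x o ≤ s * (dist x a + dist a o) :=
    mul_le_mul_of_nonneg_left (dist_triangle x a o) hs0.le
  have hhalf : s * dist x a ≤ 1 / 2 * dist x a := mul_le_mul_of_nonneg_right hs dist_nonneg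
  exact ⟨a, ha, by linarith⟩

theorem abs_weightedInfDist_sub_mul_dist_le (o : M) (A : Set M) (x y : M) :
    |weightedInfDist o A x - weightedInfDist o A y| * dist x o ≤
      (2 + infDist o A) * dist x y := by
  have hsplit : (weightedInfDist o A x - weightedInfDist o A y) * (1 + dist x o) =
      (infDist x A - infDist y A) + weightedInfDist o A y * (dist y o - dist x o) := by
    unfold weightedInfDist
    field_simp
    ring
  have hinf : |infDist x A - infDist y A| ≤ dist x y := by
    simpa [Real.dist_eq] using (lipschitz_infDist_pt A).dist_le_mul x y
  have hbase : |dist y o - dist x o| ≤ dist x y := by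
    rw [dist_comm x y]
    exact abs_dist_sub_le y x o
  have hweight : 0 ≤ weightedInfDist o A y := div_nonneg infDist_nonneg (by positivity)
  have hweight_le : weightedInfDist o A y ≤ 1 + infDist o A := by
    rw [weightedInfDist, div_le_iff₀ (by positivity)]
    nlinarith [infDist_le_infDist_add_dist (s := A) (x := y) (y := o),
      dist_nonneg (x := y) (y := o), infDist_nonneg (s := A) (x := o)]
  calc |weightedInfDist o A x - weightedInfDist o A y| * dist x o
      ≤ |weightedInfDist o A x - weightedInfDist o A y| * |1 + dist x o| := by
        gcongr
        exact (le_add_of_nonneg_left zero_le_one).trans (le_abs_self _)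
    _ = |(infDist x A - infDist y A) + weightedInfDist o A y * (dist y o - dist x o)| := by
        rw [← abs_mul, hsplit]
    _ ≤ |infDist x A - infDist y A| + weightedInfDist o A y * |dist y o - dist x o| :=
        (abs_add_le _ _).trans_eq (by rw [abs_mul, abs_of_nonneg hweight])
    _ ≤ dist x y + (1 + infDist o A) * dist x y :=
        add_le_add hinf (mul_le_mul hweight_le hbase (abs_nonneg _) (hweight.trans hweight_le))
    _ = (2 + infDist o A) * dist x y := by ring

/-- The piecewise linear function of `weightedInfDist o A` which is `1` up to the value `s` and `0`
from `2 * s` on: a symbol that localizes a multiplier near `A`. -/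
def cutoff (o : M) (A : Set M) (s : ℝ) (x : M) : ℝ :=
  max 0 (min 1 (2 - weightedInfDist o A x / s))

theorem abs_cutoff_le_one : |cutoff o A s x| ≤ 1 :=
  abs_le.2 ⟨(neg_nonpos.2 zero_le_one).trans (le_max_left _ _),
    max_le zero_le_one (min_le_left _ _)⟩

theorem cutoff_eq_one (hs : 0 < s) (h : weightedInfDist o A x ≤ s) : cutoff o A s x = 1 := by
  have hle : weightedInfDist o A x / s ≤ 1 := (div_le_one hs).2 h
  rw [cutoff, min_eq_left (by linarith), max_eq_right zero_le_one]

theorem cutoff_eq_zero (hs : 0 < s) (h : 2 * s ≤ weightedInfDist o A x) : cutoff o A s x = 0 := by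
  have hle : 2 ≤ weightedInfDist o A x / s := (le_div_iff₀ hs).2 h
  rw [cutoff, max_eq_left ((min_le_right _ _).trans (by linarith))]

theorem weightedInfDist_lt_of_mem_support_cutoff (hs : 0 < s)
    (hx : x ∈ Function.support (cutoff o A s)) : weightedInfDist o A x < 2 * s :=
  not_le.1 fun h => hx (cutoff_eq_zero hs h)

theorem abs_cutoff_sub_le (hs : 0 < s) (x y : M) : |cutoff o A s x - cutoff o A s y| ≤
    |weightedInfDist o A x - weightedInfDist o A y| / s := by
  have hclamp : ∀ a b : ℝ, |max 0 (min 1 a) - max 0 (min 1 b)| ≤ |a - b| := fun a b =>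
    (abs_max_sub_max_le_max _ _ _ _).trans <| max_le (by simp) <|
      (abs_min_sub_min_le_max _ _ _ _).trans <| max_le (by simp) le_rfl
  refine (hclamp _ _).trans_eq ?_
  rw [sub_sub_sub_cancel_left, ← sub_div, abs_div, abs_of_pos hs, abs_sub_comm]

theorem exists_support_cutoff_singleton_subset {U : Set M} (hU : U ∈ 𝓝 x) :
    ∃ s > 0, Function.support (cutoff o {x} s) ⊆ U := by
  obtain ⟨r, hr, hrU⟩ := Metric.mem_nhds_iff.1 hU
  have hs : 0 < min (1 / 4) (r / (4 * (1 + dist x o))) := by positivity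
  refine ⟨_, hs, fun y hy => hrU ?_⟩
  obtain ⟨a, rfl, hya⟩ := exists_dist_lt_of_weightedInfDist_lt_of_le_half (singleton_nonempty x)
    (weightedInfDist_lt_of_mem_support_cutoff hs hy)
    (by linarith [min_le_left (1 / 4) (r / (4 * (1 + dist x o)))])
  have hsr := (le_div_iff₀ (by positivity)).1 (min_le_right (1 / 4) (r / (4 * (1 + dist a o))))
  exact mem_ball.2 (hya.trans_le (by linarith))

theorem cutoff_singleton_eqOn_one (hs : 0 < s) :
    EqOn (cutoff o {x} s) 1 (ball x s) := fun y hy =>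
  cutoff_eq_one hs (weightedInfDist_le_infDist.trans (by simpa using (mem_ball.1 hy).le))

theorem IsLipschitzFree.exists_isMultiplier_cutoff {F : Type*} [NormedAddCommGroup F]
    [NormedSpace ℝ F] [CompleteSpace F] {δ : M → F} (hδ : IsLipschitzFree o δ) (A : Set M)
    (hs : 0 < s) :
    ∃ T, IsMultiplier δ T (cutoff o A s) ∧ ‖T‖ ≤ 1 + (2 + infDist o A) / s := by
  have hinf : 0 ≤ infDist o A := infDist_nonneg
  refine hδ.exists_isMultiplier (fun x => abs_cutoff_le_one) (by positivity) fun x y => ?_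
  calc |cutoff o A s x - cutoff o A s y| * dist x o
      ≤ |weightedInfDist o A x - weightedInfDist o A y| / s * dist x o := by
        gcongr
        exact abs_cutoff_sub_le hs x y
    _ = |weightedInfDist o A x - weightedInfDist o A y| * dist x o / s := div_mul_eq_mul_div _ _ _
    _ ≤ (2 + infDist o A) * dist x y / s :=
        div_le_div_of_nonneg_right (abs_weightedInfDist_sub_mul_dist_le o A x y) hs.le
    _ = (2 + infDist o A) / s * dist x y := (div_mul_eq_mul_div _ _ _).symm

end Cutoff

section GlidingHump

variable {M : Type*} [MetricSpace M] {o : M}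
  {F : Type*} [NormedAddCommGroup F] [NormedSpace ℝ F] {δ : M → F} {Γ : Set F} {A : Set M} {s ε : ℝ}

theorem exists_seq_pairwise_eq_zero {P : (F →L[ℝ] ℝ) → Prop}
    (hP : ∀ A : Set M, A.Finite → o ∈ A → ∃ g, P g ∧
      (∀ x, weightedInfDist o A x ≤ s → g (δ x) = 0) ∧
      ∃ B : Set M, B.Finite ∧ o ∈ B ∧ ∀ x, s ≤ weightedInfDist o B x → g (δ x) = 0) :
    ∃ g : ℕ → F →L[ℝ] ℝ, (∀ n, P (g n)) ∧
      Pairwise fun m n => ∀ x, g m (δ x) = 0 ∨ g n (δ x) = 0 := by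
  let Q : (F →L[ℝ] ℝ) → Prop := fun g => P g ∧
    ∃ B : Set M, B.Finite ∧ o ∈ B ∧ ∀ x, s ≤ weightedInfDist o B x → g (δ x) = 0
  let r : (F →L[ℝ] ℝ) → (F →L[ℝ] ℝ) → Prop := fun p q => ∀ x, p (δ x) = 0 ∨ q (δ x) = 0
  have : Std.Symm r := ⟨fun p q h x => (h x).symm⟩
  have hnext : ∀ G : Finset (F →L[ℝ] ℝ), (∀ p ∈ G, Q p) → ∃ g, Q g ∧ ∀ p ∈ G, r p g := by
    intro G hG
    choose! B hBfin hBo hB using fun p hp => (hG p hp).2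
    obtain ⟨g, hPg, hgA, hgB⟩ := hP (insert o (⋃ p ∈ G, B p))
      ((G.finite_toSet.biUnion hBfin).insert o) (mem_insert _ _)
    refine ⟨g, ⟨hPg, hgB⟩, fun p hp x => ?_⟩
    rcases le_total s (weightedInfDist o (B p) x) with hx | hx
    · exact .inl (hB p hp x hx)
    · have hsub : B p ⊆ insert o (⋃ p ∈ G, B p) :=
        (subset_biUnion_of_mem (u := B) (Finset.mem_coe.2 hp)).trans (subset_insert _ _)
      exact .inr (hgA x ((weightedInfDist_anti ⟨o, hBo p hp⟩ hsub).trans hx))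
  obtain ⟨g, hg, hdisj⟩ := exists_seq_of_forall_finset_exists' Q r hnext
  exact ⟨g, fun n => (hg n).1, hdisj⟩

variable [CompleteSpace F]

theorem IsLipschitzFree.exists_isMultiplier_cutoff_of_mem (hδ : IsLipschitzFree o δ)
    (hA : o ∈ A) (hs : 0 < s) : ∃ T, IsMultiplier δ T (cutoff o A s) ∧ ‖T‖ ≤ 1 + 2 / s := by
  simpa [infDist_zero_of_mem hA] using hδ.exists_isMultiplier_cutoff A hs

theorem IsLipschitzFree.exists_truncation (hδ : IsLipschitzFree o δ) (φ : F →L[ℝ] ℝ) {μ : F}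
    (hμ : ε < φ μ) (hs : 0 < s) : ∃ g : F →L[ℝ] ℝ, ‖g‖ ≤ ‖φ‖ * (1 + 2 / s) ∧ ε < g μ ∧
      (∀ x, φ (δ x) = 0 → g (δ x) = 0) ∧
      ∃ B : Set M, B.Finite ∧ o ∈ B ∧ ∀ x, 2 * s ≤ weightedInfDist o B x → g (δ x) = 0 := by
  obtain ⟨B, hB, hBU⟩ := IsMultiplier.exists_finite_mem_nhds hδ
    ((isOpen_lt continuous_const φ.continuous).mem_nhds hμ) (show 0 ≤ 1 + 2 / s by positivity)
  obtain ⟨T, hT, hTs⟩ := hδ.exists_isMultiplier_cutoff_of_mem (mem_insert o B) hs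
  have hone : EqOn (cutoff o (insert o B) s) 1 B := fun x hx =>
    cutoff_eq_one hs ((weightedInfDist_of_mem (mem_insert_of_mem o hx)).trans_le hs.le)
  have hval : ∀ x, (φ.comp T) (δ x) = cutoff o (insert o B) s x * φ (δ x) := fun x => by
    rw [ContinuousLinearMap.comp_apply, hT, map_smul, smul_eq_mul]
  refine ⟨φ.comp T, ?_, hBU T _ hT hTs hone, fun x hx => ?_, insert o B, hB.insert o,
    mem_insert _ _, fun x hx => ?_⟩
  · exact (φ.opNorm_comp_le T).trans (by gcongr)
  · rw [hval, hx, mul_zero]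
  · rw [hval, cutoff_eq_zero hs hx, zero_mul]

theorem IsLipschitzFree.exists_hump (hδ : IsLipschitzFree o δ) (hA : o ∈ A) (hs : 0 < s)
    (hΓ : ∀ T, IsMultiplier δ T (cutoff o A s) → ∃ μ ∈ Γ, ε < ‖μ - T μ‖) :
    ∃ g : F →L[ℝ] ℝ, (‖g‖ ≤ (2 + 2 / s) * (1 + 2 / (s / 2)) ∧ ∃ μ ∈ Γ, ε < g μ) ∧
      (∀ x, weightedInfDist o A x ≤ s → g (δ x) = 0) ∧
      ∃ B : Set M, B.Finite ∧ o ∈ B ∧ ∀ x, s ≤ weightedInfDist o B x → g (δ x) = 0 := by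
  obtain ⟨T, hT, hTs⟩ := hδ.exists_isMultiplier_cutoff_of_mem hA hs
  obtain ⟨μ, hμΓ, hμ⟩ := hΓ T hT
  obtain ⟨f, hf, hfμ⟩ := exists_dual_vector'' ℝ (μ - T μ)
  have hfμ' : f (μ - T μ) = ‖μ - T μ‖ := hfμ
  let φ : F →L[ℝ] ℝ := f.comp (.id ℝ F - T)
  have hφ : ‖φ‖ ≤ 2 + 2 / s := calc
    ‖φ‖ ≤ ‖f‖ * ‖ContinuousLinearMap.id ℝ F - T‖ := f.opNorm_comp_le _
    _ ≤ 1 * (1 + (1 + 2 / s)) := by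
      gcongr
      exact (norm_sub_le _ _).trans (add_le_add ContinuousLinearMap.norm_id_le hTs)
    _ = 2 + 2 / s := by ring
  obtain ⟨g, hg, hgμ, hgφ, B, hB, hBo, hgB⟩ :=
    hδ.exists_truncation φ (hμ.trans_eq hfμ'.symm) (half_pos hs)
  refine ⟨g, ⟨hg.trans (by gcongr), μ, hμΓ, hgμ⟩, fun x hx => hgφ x ?_, B, hB, hBo, fun x hx => ?_⟩
  · simp [φ, hT x, cutoff_eq_one hs hx]
  · exact hgB x (by rwa [mul_div_cancel₀ s two_ne_zero])

theorem IsVStarSet.exists_cutoff (hΓ : IsVStarSet Γ) (hδ : IsLipschitzFree o δ) (hs : 0 < s)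
    (hε : 0 < ε) : ∃ A : Set M, A.Finite ∧ o ∈ A ∧
      ∃ T, IsMultiplier δ T (cutoff o A s) ∧ ∀ μ ∈ Γ, ‖μ - T μ‖ ≤ ε := by
  by_contra! hnot
  obtain ⟨g, hg, hdisj⟩ := exists_seq_pairwise_eq_zero fun A hA hoA =>
    hδ.exists_hump hoA hs (hnot A hA hoA)
  have hwuc : IsWUC g := hδ.isWUC_of_pairwise_disjoint (fun n => (hg n).1) hdisj
  obtain ⟨n, hn⟩ := (hΓ g hwuc ε hε).exists
  obtain ⟨μ, hμΓ, hμ⟩ := (hg n).2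
  exact (hμ.trans_le (le_abs_self _)).not_ge (hn μ hμΓ)

end GlidingHump

section Tightness

variable {M : Type*} [MetricSpace M] {o : M}
  {F : Type*} [NormedAddCommGroup F] [NormedSpace ℝ F] {δ : M → F} {Γ : Set F} {ε : ℝ}

theorem isBounded_support_cutoff {A : Set M} (hA : Bornology.IsBounded A) (hA' : A.Nonempty) :
    Bornology.IsBounded (Function.support (cutoff o A (1 / 4))) := by
  obtain ⟨R, hR⟩ := hA.subset_closedBall o
  refine (isBounded_iff_subset_closedBall o).2 ⟨1 + 2 * R, fun x hx => ?_⟩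
  obtain ⟨a, ha, hxa⟩ := exists_dist_lt_of_weightedInfDist_lt_of_le_half hA'
    (weightedInfDist_lt_of_mem_support_cutoff (by norm_num) hx) (by norm_num)
  have hao : dist a o ≤ R := hR ha
  rw [mem_closedBall]
  linarith [dist_triangle x a o]

variable [CompleteSpace F]

theorem IsVStarSet.exists_support_subset_biUnion_ball (hΓ : IsVStarSet Γ)
    (hδ : IsLipschitzFree o δ) (hε : 0 < ε) {r : ℝ} (hr : 0 < r) :
    ∃ t : Set M, t.Finite ∧ ∃ T h, IsMultiplier δ T h ∧ Function.support h ⊆ ⋃ a ∈ t, ball a r ∧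
      ∀ μ ∈ Γ, ‖μ - T μ‖ ≤ ε := by
  obtain ⟨A, hA, hoA, S, hS, hSΓ⟩ :=
    hΓ.exists_cutoff hδ (show (0 : ℝ) < 1 / 4 by norm_num) (half_pos hε)
  have hbdd := isBounded_support_cutoff (o := o) hA.isBounded ⟨o, hoA⟩
  obtain ⟨R, hR0, hR⟩ := hbdd.subset_closedBall_lt 0 o
  have hs : 0 < r / (2 * (1 + R)) := by positivity
  obtain ⟨B, hB, hoB, T, hT, hTΓ⟩ := (hΓ.image S).exists_cutoff hδ hs (half_pos hε)
  refine ⟨B, hB, T.comp S, _, hT.comp hS, fun x hx => ?_, fun μ hμ => ?_⟩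
  · obtain ⟨hxB, hxA⟩ : x ∈ Function.support (cutoff o B _) ∩ Function.support (cutoff o A _) := by
      rwa [← Function.support_mul']
    obtain ⟨b, hb, hxb⟩ := exists_dist_lt_of_weightedInfDist_lt ⟨o, hoB⟩
      (weightedInfDist_lt_of_mem_support_cutoff hs hxB)
    have hxo : dist x o ≤ R := hR hxA
    refine mem_biUnion hb (mem_ball.2 (hxb.trans_le ?_))
    calc 2 * (r / (2 * (1 + R))) * (1 + dist x o) ≤ 2 * (r / (2 * (1 + R))) * (1 + R) := by gcongr
      _ = r := by field_simp
  · calc ‖μ - T (S μ)‖ ≤ ‖μ - S μ‖ + ‖S μ - T (S μ)‖ := norm_sub_le_norm_sub_add_norm_sub _ _ _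
      _ ≤ ε / 2 + ε / 2 := add_le_add (hSΓ μ hμ) (hTΓ _ (mem_image_of_mem S hμ))
      _ = ε := add_halves ε

theorem IsVStarSet.exists_seq_isMultiplier (hΓ : IsVStarSet Γ) (hδ : IsLipschitzFree o δ)
    (hε : 0 < ε) : ∃ (P : ℕ → F →L[ℝ] F) (H : ℕ → M → ℝ), (∀ k, IsMultiplier δ (P k) (H k)) ∧
      Antitone (fun k => Function.support (H k)) ∧
      (∀ k : ℕ, ∃ t : Set M, t.Finite ∧
        Function.support (H (k + 1)) ⊆ ⋃ a ∈ t, ball a (1 / ((k : ℝ) + 1))) ∧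
      ∀ k, ∀ μ ∈ Γ, ‖μ - P k μ‖ ≤ ε := by
  choose t ht T h hT hsupp hTΓ using fun (k : ℕ) (P : F →L[ℝ] F) =>
    (hΓ.image P).exists_support_subset_biUnion_ball hδ (ε := ε * (1 / 2) ^ (k + 1))
      (r := 1 / ((k : ℝ) + 1)) (by positivity) (by positivity)
  let P : ℕ → F →L[ℝ] F := fun k => Nat.rec (.id ℝ F) (fun k P => (T k P).comp P) k
  let H : ℕ → M → ℝ := fun k => Nat.rec 1 (fun k H => h k (P k) * H) k
  have hsucc : ∀ k, Function.support (H (k + 1)) =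
      Function.support (h k (P k)) ∩ Function.support (H k) := fun k => Function.support_mul' _ _
  have hP : ∀ k, IsMultiplier δ (P k) (H k) := fun k => by
    induction k with
    | zero => exact .id
    | succ k ih => exact (hT k (P k)).comp ih
  have hPΓ : ∀ k, ∀ μ ∈ Γ, ‖μ - P k μ‖ ≤ ε * (1 - (1 / 2) ^ k) := fun k μ hμ => by
    induction k with
    | zero => simp [P]
    | succ k ih =>
      calc ‖μ - P (k + 1) μ‖ ≤ ‖μ - P k μ‖ + ‖P k μ - T k (P k) (P k μ)‖ :=
            norm_sub_le_norm_sub_add_norm_sub _ _ _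
        _ ≤ ε * (1 - (1 / 2) ^ k) + ε * (1 / 2) ^ (k + 1) :=
            add_le_add ih (hTΓ k (P k) _ (mem_image_of_mem _ hμ))
        _ = ε * (1 - (1 / 2) ^ (k + 1)) := by ring
  refine ⟨P, H, hP, antitone_nat_of_succ_le fun k => ?_, fun k => ⟨t k (P k), ht k (P k), ?_⟩,
    fun k μ hμ => (hPΓ k μ hμ).trans (mul_le_of_le_one_right hε.le (sub_le_self _ (by positivity)))⟩
  · exact (hsucc k).trans_subset inter_subset_right
  · exact (hsucc k).trans_subset (inter_subset_left.trans (hsupp k (P k)))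

theorem IsVStarSet.exists_totallyBounded (hΓ : IsVStarSet Γ) (hδ : IsLipschitzFree o δ)
    (hε : 0 < ε) : ∃ f : Filter M, f.TotallyBounded ∧ ∀ E ∈ f, ∃ P H, IsMultiplier δ P H ∧
      Function.support H ⊆ E ∧ ∀ μ ∈ Γ, ‖μ - P μ‖ ≤ ε := by
  obtain ⟨P, H, hP, hanti, hcover, hPΓ⟩ := hΓ.exists_seq_isMultiplier hδ hε
  have hbasis := HasAntitoneBasis.iInf_principal hanti
  refine ⟨⨅ k, 𝓟 (Function.support (H k)), ?_, fun E hE => ?_⟩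
  · refine uniformity_basis_dist_inv_nat_succ.filter_totallyBounded_iff.2 fun k _ => ?_
    obtain ⟨t, ht, hHt⟩ := hcover k
    refine ⟨t, ht, mem_of_superset (hbasis.mem (k + 1)) fun x hx => ?_⟩
    simpa [SetRel.preimage] using hHt hx
  · obtain ⟨k, hk⟩ := hbasis.mem_iff.1 hE
    exact ⟨P k, H k, hP k, hk, hPΓ k⟩

end Tightness

section Localization

variable {M : Type*} {F : Type*} [NormedAddCommGroup F] [NormedSpace ℝ F] {δ : M → F}

/-- `E` has a weakly compact unit if some multiplier with symbol `1` on `E` maps (V*)-sets to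
relatively weakly compact sets. Such sets form an ideal, to which small neighbourhoods of each point
belong when property (V*) holds locally. -/
def HasWeaklyCompactUnit (δ : M → F) (E : Set M) : Prop :=
  ∃ S h, IsMultiplier δ S h ∧ EqOn h 1 E ∧ MapsVStarToWeaklyCompact S

namespace HasWeaklyCompactUnit

theorem empty : HasWeaklyCompactUnit δ ∅ :=
  ⟨0, 0, .zero, eqOn_empty _ _, .zero⟩

theorem mono {D E : Set M} (hE : HasWeaklyCompactUnit δ E) (h : D ⊆ E) :
    HasWeaklyCompactUnit δ D :=
  let ⟨S, g, hS, hg, hSΓ⟩ := hE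
  ⟨S, g, hS, hg.mono h, hSΓ⟩

theorem union {D E : Set M} (hD : HasWeaklyCompactUnit δ D) (hE : HasWeaklyCompactUnit δ E) :
    HasWeaklyCompactUnit δ (D ∪ E) := by
  obtain ⟨S, g, hS, hg, hSΓ⟩ := hD
  obtain ⟨T, h, hT, hh, hTΓ⟩ := hE
  refine ⟨S + T.comp (.id ℝ F - S), g + h * (1 - g), hS.add (hT.comp (.sub .id hS)), ?_,
    hSΓ.add (hTΓ.comp _)⟩
  rintro x (hx | hx)
  · simp [hg hx]
  · simp [hh hx]

variable [MetricSpace M] {o : M}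

theorem exists_mem_nhds [CompleteSpace F] (hδ : IsLipschitzFree o δ) {x : M} {U : Set M}
    (hU : U ∈ 𝓝 x) (hUV : HasPropertyVStar (freeSpan δ (closure U ∪ {o}))) :
    ∃ V ∈ 𝓝 x, HasWeaklyCompactUnit δ V := by
  obtain ⟨s, hs, hsU⟩ := exists_support_cutoff_singleton_subset (o := o) hU
  obtain ⟨T, hT, -⟩ := hδ.exists_isMultiplier_cutoff {x} hs
  have hsub : Function.support (cutoff o {x} s) ⊆ closure U ∪ {o} :=
    hsU.trans (subset_closure.trans subset_union_left)
  exact ⟨ball x s, ball_mem_nhds x hs, T, _, hT, cutoff_singleton_eqOn_one hs,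
    hUV.mapsVStarToWeaklyCompact (hT.mem_freeSpan hδ hsub)⟩

theorem mapsVStarToWeaklyCompact {E : Set M} (hE : HasWeaklyCompactUnit δ E)
    (hδ : IsLipschitzFree o δ) {P : F →L[ℝ] F} {h : M → ℝ} (hP : IsMultiplier δ P h)
    (hhE : Function.support h ⊆ E) : MapsVStarToWeaklyCompact P := by
  obtain ⟨S, g, hS, hg, hSΓ⟩ := hE
  have hgh : g * h = h := funext fun x => by
    by_cases hx : x ∈ E
    · simp [hg hx]
    · simp [Function.notMem_support.1 fun hxh => hx (hhE hxh)]
  rw [hP.unique hδ (hgh ▸ hS.comp hP)]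
  exact hSΓ.comp P

end HasWeaklyCompactUnit

end Localization

/-- **Property (V*) is locally determined for Lipschitz-free spaces.**
If `M` is a complete pointed metric space such that every point `x ∈ M` has a
neighborhood `U` for which the Lipschitz-free space `F(cl(U) ∪ {0})` has property (V*),
then `F(M)` has property (V*). -/
theorem locallyDetermined_propertyVStar
    {M : Type*} [MetricSpace M] [CompleteSpace M] (o : M)
    {F : Type*} [NormedAddCommGroup F] [NormedSpace ℝ F] [CompleteSpace F]
    (δ : M → F) (hδ : IsLipschitzFree o δ)
    (hloc : ∀ x : M, ∃ U ∈ 𝓝 x, HasPropertyVStar ↥(freeSpan δ (closure U ∪ {o}))) :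
    HasPropertyVStar F := by
  intro Γ hΓ
  refine RelWeaklyCompact.of_forall_exists_norm_sub_le fun ε hε => ?_
  obtain ⟨f, hf, hfΓ⟩ := hΓ.exists_totallyBounded hδ hε
  obtain ⟨E, hEf, hE⟩ : ∃ E ∈ f, HasWeaklyCompactUnit δ E :=
    exists_mem_of_totallyBounded hf .empty (fun _ hE _ => hE.mono) (fun _ hD _ hE => hD.union hE)
      fun x => let ⟨_, hU, hUV⟩ := hloc x; HasWeaklyCompactUnit.exists_mem_nhds hδ hU hUV
  obtain ⟨P, h, hP, hhE, hPΓ⟩ := hfΓ E hEf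
  exact ⟨P '' Γ, hE.mapsVStarToWeaklyCompact hδ hP hhE Γ hΓ, fun μ hμ =>
    ⟨P μ, mem_image_of_mem P hμ, hPΓ μ hμ⟩⟩
end
end

section
/- If M is a complete, locally compact, purely 1-unrectifiable pointed metric space, then the Lipschitz-free space F(M) has property (V*). -/
/-!
Every (V*)-set `Γ` of `F(M)` is in fact totally bounded. Gliding hump constructions of WUC series
in `Lip₀(M)` show that, up to `ε`, the values on `Γ` of functionals of norm at most `C` are
controlled by two kinds of smallness: smallness on a suitable compact set `K`, and uniform
smallness on `M` together with an almost vanishing local slope. Pure 1-unrectifiability links the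
two. On a compact purely 1-unrectifiable space, chains of ever smaller steps and bounded total
length converge to Lipschitz curves, along which a Lipschitz function `f` has a null image, so
almost all of the variation of `f` along such chains is due to long steps. An infimum over chains
therefore yields uniform approximations of `f` with the same Lipschitz constant and arbitrarily
small local slope. Applied on a compact neighbourhood of `K`, this approximates, uniformly on `K`,
every functional that vanishes on a fine finite net of `K` by a uniformly small one with small
local slope. Hence such functionals are small on `Γ`, that is, `Γ` is close to a
finite-dimensional subspace.
-/

open Filter Topology Metric Set

noncomputable section

/-- A metric space is purely 1-unrectifiable if it contains no bi-Lipschitz copy of a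
subset of `ℝ` of positive Lebesgue measure. -/
def Purely1Unrectifiable (M : Type*) [MetricSpace M] : Prop :=
  ¬ ∃ (A : Set ℝ) (f : ℝ → M) (c C : ℝ), 0 < MeasureTheory.volume A ∧ 0 < c ∧
      ∀ x ∈ A, ∀ y ∈ A,
        c * |x - y| ≤ dist (f x) (f y) ∧ dist (f x) (f y) ≤ C * |x - y|

/-! ### Null images of curves -/

section
variable {M : Type*} [MetricSpace M]

open MeasureTheory
open scoped NNReal

namespace Purely1Unrectifiable

theorem subtype (hM : Purely1Unrectifiable M) (S : Set M) : Purely1Unrectifiable S :=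
  fun ⟨A, f, h⟩ => hM ⟨A, fun t => f t, h⟩

theorem volume_eq_zero (hM : Purely1Unrectifiable M) {A : Set ℝ} {γ : ℝ → M} {C K : ℝ≥0}
    (hγ : LipschitzOnWith C γ A) (hγ' : ∀ s ∈ A, ∀ t ∈ A, dist s t ≤ K * dist (γ s) (γ t)) :
    volume A = 0 := by
  by_contra hA
  refine hM ⟨A, γ, (K + 1 : ℝ)⁻¹, C, pos_iff_ne_zero.2 hA, by positivity, fun s hs t ht =>
    ⟨?_, hγ.dist_le_mul s hs t ht⟩⟩
  rw [inv_mul_le_iff₀ (by positivity)]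
  exact (hγ' s hs t ht).trans (by gcongr; linarith)

open scoped Classical in
/-- Up to countable decomposition `f ∘ γ` is close to a nonzero linear map, which makes `γ`
bi-Lipschitz. -/
theorem volume_eq_zero_of_hasDerivWithinAt (hM : Purely1Unrectifiable M) {A : Set ℝ}
    {γ : ℝ → M} {f : M → ℝ} {C K : ℝ≥0} (hγ : LipschitzOnWith C γ A) (hf : LipschitzWith K f)
    {f' : ℝ → ℝ} (hf' : ∀ t ∈ A, HasDerivWithinAt (f ∘ γ) (f' t) A t)
    (hne : ∀ t ∈ A, f' t ≠ 0) : volume A = 0 := by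
  obtain rfl | hA := A.eq_empty_or_nonempty
  · exact measure_empty
  obtain ⟨piece, D, -, hcover, happrox, hD⟩ :=
    exists_closed_cover_approximatesLinearOn_of_hasFDerivWithinAt (f ∘ γ) A _
      (fun t ht => (hf' t ht).hasFDerivWithinAt)
      (fun D => if D 1 = 0 then 1 else ‖D 1‖₊ / 2) (fun D => by split_ifs with h <;> simp [h])
  refine measure_mono_null (subset_inter Subset.rfl hcover) ?_
  rw [inter_iUnion]
  refine measure_iUnion_null fun n => ?_
  obtain ⟨t₀, ht₀, hDn⟩ := hD hA n
  have hD1 : D n 1 = f' t₀ := by simp [hDn]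
  have hpos : 0 < ‖f' t₀‖ := norm_pos_iff.2 (hne t₀ ht₀)
  refine hM.volume_eq_zero (hγ.mono inter_subset_left) (K := 2 * K / ‖f' t₀‖₊)
    fun s hs t ht => ?_
  have hlinear : ‖(f ∘ γ) s - (f ∘ γ) t - D n (s - t)‖ ≤ ‖f' t₀‖ / 2 * dist s t := by
    simpa [hD1, hne t₀ ht₀, Real.dist_eq] using happrox n s hs t ht
  have hDst : ‖D n (s - t)‖ = ‖f' t₀‖ * dist s t := by
    simp [hDn, Real.dist_eq, mul_comm]
  have hfγ : ‖(f ∘ γ) s - (f ∘ γ) t‖ ≤ K * dist (γ s) (γ t) := hf.dist_le_mul _ _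
  have htriangle := norm_sub_norm_le (D n (s - t)) ((f ∘ γ) s - (f ∘ γ) t)
  rw [norm_sub_rev (D n _)] at htriangle
  rw [NNReal.coe_div, coe_nnnorm, div_mul_eq_mul_div, le_div_iff₀ hpos, NNReal.coe_mul,
    NNReal.coe_ofNat]
  linarith

/-- Where `f ∘ γ` has no derivative or a nonzero one, the parameters form a null set; where the
derivative vanishes, Sard's lemma applies. -/
theorem volume_image_comp_eq_zero (hM : Purely1Unrectifiable M) {A : Set ℝ} {γ : ℝ → M}
    {f : M → ℝ} {C K : ℝ≥0} (hγ : LipschitzOnWith C γ A) (hf : LipschitzWith K f) :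
    volume ((f ∘ γ) '' A) = 0 := by
  have hfγ : LipschitzOnWith (K * C) (f ∘ γ) A := hf.comp_lipschitzOnWith hγ
  have image_null {N : Set ℝ} (hNA : N ⊆ A) (hN : volume N = 0) : volume ((f ∘ γ) '' N) = 0 := by
    have := (hfγ.mono hNA).hausdorffMeasure_image_le zero_le_one
    simpa [hausdorffMeasure_real, hN] using this
  let nondiff := {t ∈ A | ¬DifferentiableWithinAt ℝ (f ∘ γ) A t}
  let regular := {t ∈ A | DifferentiableWithinAt ℝ (f ∘ γ) A t ∧ derivWithin (f ∘ γ) A t ≠ 0}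
  let critical := {t ∈ A | DifferentiableWithinAt ℝ (f ∘ γ) A t ∧ derivWithin (f ∘ γ) A t = 0}
  have hcover : A ⊆ nondiff ∪ regular ∪ critical := fun t ht => by
    by_cases h : DifferentiableWithinAt ℝ (f ∘ γ) A t <;>
      by_cases h' : derivWithin (f ∘ γ) A t = 0 <;> simp [nondiff, regular, critical, *]
  have hnondiff : volume nondiff = 0 := by
    simpa [ae_iff, nondiff] using hfγ.ae_differentiableWithinAt_of_mem_real
  have hregular : volume regular = 0 :=
    hM.volume_eq_zero_of_hasDerivWithinAt (hγ.mono (sep_subset _ _)) hf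
      (fun t ht => ht.2.1.hasDerivWithinAt.mono (sep_subset _ _)) fun t ht => ht.2.2
  have hcritical : volume ((f ∘ γ) '' critical) = 0 := by
    refine addHaar_image_eq_zero_of_det_fderivWithin_eq_zero volume
      (fun t ht => (ht.2.1.hasDerivWithinAt.mono (sep_subset _ _)).hasFDerivWithinAt)
      fun t ht => by simp [ht.2.2]
  refine measure_mono_null (image_mono hcover) ?_
  rw [image_union, image_union]
  exact measure_union_null (measure_union_null (image_null (sep_subset _ _) hnondiff)
    (image_null (sep_subset _ _) hregular)) hcritical

end Purely1Unrectifiable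
end

section
open MeasureTheory TopologicalSpace
open scoped NNReal

theorem subset_cthickening_of_dist_le {α : Type*} [MetricSpace α] {S T : NonemptyCompacts α}
    {s : ℝ} (h : dist S T ≤ s) : (S : Set α) ⊆ cthickening s T := fun x hx => by
  rw [mem_cthickening_iff]
  calc infEDist x T ≤ hausdorffEDist (S : Set α) T := infEDist_le_hausdorffEDist_of_mem hx
    _ = ENNReal.ofReal (dist S T) := edist_dist S T
    _ ≤ ENNReal.ofReal s := ENNReal.ofReal_le_ofReal h

theorem exists_measure_cthickening_lt_of_isCompact {α : Type*} [MetricSpace α] [ProperSpace α]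
    [MeasurableSpace α] [OpensMeasurableSpace α] (μ : Measure α) [IsFiniteMeasureOnCompacts μ]
    {𝒮 : Set (NonemptyCompacts α)} (h𝒮 : IsCompact 𝒮) {ε : ENNReal}
    (hμ : ∀ S ∈ 𝒮, μ S < ε) :
    ∃ s > 0, ∀ S ∈ 𝒮, μ (cthickening s (S : Set α)) < ε := by
  refine h𝒮.induction_on (p := fun 𝒯 => ∃ s > 0, ∀ S ∈ 𝒯, μ (cthickening s (S : Set α)) < ε)
    ⟨1, one_pos, by simp⟩ (fun _ _ hsub ⟨s, hs, h⟩ => ⟨s, hs, fun S hS => h S (hsub hS)⟩) ?_ ?_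
  · rintro 𝒯₁ 𝒯₂ ⟨s₁, hs₁, h₁⟩ ⟨s₂, hs₂, h₂⟩
    refine ⟨min s₁ s₂, lt_min hs₁ hs₂, ?_⟩
    rintro S (hS | hS)
    · exact (measure_mono (cthickening_mono (min_le_left _ _) _)).trans_lt (h₁ S hS)
    · exact (measure_mono (cthickening_mono (min_le_right _ _) _)).trans_lt (h₂ S hS)
  · intro S hS
    have hev := (tendsto_measure_cthickening_of_isCompact S.isCompact).eventually_lt_const
      (hμ S hS)
    obtain ⟨r, hr, h⟩ := Metric.eventually_nhds_iff.1 hev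
    refine ⟨closedBall S (r / 4),
      mem_nhdsWithin_of_mem_nhds (closedBall_mem_nhds _ (by positivity)),
      r / 4, by positivity, fun T hT => ?_⟩
    have hsub : cthickening (r / 4) (T : Set α) ⊆ cthickening (r / 4 + r / 4) S :=
      (cthickening_subset_of_subset _ (subset_cthickening_of_dist_le hT)).trans
        (cthickening_cthickening_subset (by positivity) (by positivity) _)
    refine (measure_mono hsub).trans_lt (h ?_)
    rw [Real.dist_eq, sub_zero, abs_of_pos (by positivity)]
    linarith

theorem isCompact_setOf_forall_dist_le (Y X : Type*) [MetricSpace Y] [CompactSpace Y]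
    [MetricSpace X] [CompactSpace X] :
    IsCompact {G : NonemptyCompacts (Y × X) |
      ∀ z ∈ G, ∀ w ∈ G, dist z.2 w.2 ≤ dist z.1 w.1} := by
  have hclosed : IsClosed {q : (Y × X) × (Y × X) | dist q.1.2 q.2.2 ≤ dist q.1.1 q.2.1} :=
    isClosed_le (by fun_prop) (by fun_prop)
  have hsquare : Continuous fun G : NonemptyCompacts (Y × X) => G ×ˢ G :=
    NonemptyCompacts.continuous_prod.comp (continuous_id.prodMk continuous_id)
  convert ((NonemptyCompacts.isClosed_subsets_of_isClosed hclosed).preimage hsquare).isCompact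
    using 1
  ext G
  exact ⟨fun h q hq => h _ hq.1 _ hq.2, fun h z hz w hw => @h (z, w) ⟨hz, hw⟩⟩

variable {X : Type*} [MetricSpace X]

theorem Purely1Unrectifiable.volume_image_snd_eq_zero (hX : Purely1Unrectifiable X) {f : X → ℝ}
    {C : ℝ≥0} (hf : LipschitzWith C f) {Y : Set ℝ} {G : Set (Y × X)}
    (hG : ∀ z ∈ G, ∀ w ∈ G, dist z.2 w.2 ≤ dist z.1 w.1) :
    volume ((fun z => f z.2) '' G) = 0 := by
  obtain rfl | ⟨z₀, -⟩ := G.eq_empty_or_nonempty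
  · simp
  have : Nonempty (Y × X) := ⟨z₀⟩
  let time : Y × X → ℝ := fun z => z.1
  choose! lift hmem htime using fun t (ht : t ∈ time '' G) => ht
  have hdist {s t : ℝ} (hs : s ∈ time '' G) {z : Y × X} (hz : z ∈ G) (hzt : time z = t) :
      dist (lift s).2 z.2 ≤ dist s t := by
    simpa only [Subtype.dist_eq, time, ← hzt, htime s hs] using hG _ (hmem s hs) z hz
  have hlift : LipschitzOnWith 1 (fun t => (lift t).2) (time '' G) :=
    LipschitzOnWith.mk_one fun s hs t ht => hdist hs (hmem t ht) (htime t ht)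
  refine measure_mono_null ?_ (hX.volume_image_comp_eq_zero hlift hf)
  rintro _ ⟨z, hz, rfl⟩
  have hzt := mem_image_of_mem time hz
  exact ⟨time z, hzt, congr_arg f (dist_le_zero.1 ((hdist hzt hz rfl).trans_eq (dist_self _)))⟩

theorem Purely1Unrectifiable.exists_volume_cthickening_range_lt [CompactSpace X]
    (hX : Purely1Unrectifiable X) {f : X → ℝ} {C : ℝ≥0} (hf : LipschitzWith C f) {Y : Set ℝ}
    (hY : IsCompact Y) {ε : ENNReal} (hε : 0 < ε) :
    ∃ s > 0, ∀ (ι : Type) [Finite ι] [Nonempty ι] (t : ι → ℝ) (p : ι → X), (∀ i, t i ∈ Y) →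
      (∀ i j, dist (p i) (p j) ≤ dist (t i) (t j)) →
      volume (cthickening s (range (f ∘ p))) < ε := by
  have := isCompact_iff_compactSpace.1 hY
  have hfsnd : Continuous fun z : Y × X => f z.2 := hf.continuous.comp continuous_snd
  obtain ⟨s, hs, h⟩ := exists_measure_cthickening_lt_of_isCompact volume
    ((isCompact_setOf_forall_dist_le Y X).image hfsnd.nonemptyCompacts_map) (ε := ε) (by
      rintro _ ⟨G, hG, rfl⟩
      rwa [NonemptyCompacts.coe_map, hX.volume_image_snd_eq_zero hf hG])
  refine ⟨s, hs, fun ι _ _ t p ht hp => ?_⟩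
  let point : ι → Y × X := fun i => (⟨t i, ht i⟩, p i)
  let G : NonemptyCompacts (Y × X) := ⟨⟨range point, (finite_range point).isCompact⟩,
    range_nonempty point⟩
  have hG := h _ (mem_image_of_mem _ (show G ∈ _ by
    rintro _ ⟨i, rfl⟩ _ ⟨j, rfl⟩
    exact hp i j))
  rwa [NonemptyCompacts.coe_map, show (G : Set (Y × X)) = range point from rfl,
    ← range_comp] at hG
end

section
open MeasureTheory
open scoped NNReal

theorem uIcc_subset_insert_biUnion_uIcc (a : ℕ → ℝ) (N : ℕ) :
    uIcc (a 0) (a N) ⊆ insert (a 0) (⋃ i ∈ Finset.range N, uIcc (a i) (a (i + 1))) := by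
  induction N with
  | zero => simp
  | succ n ih =>
    rw [Finset.range_add_one, Finset.set_biUnion_insert, union_comm, ← insert_union]
    exact uIcc_subset_uIcc_union_uIcc.trans (union_subset_union_left _ ih)

variable {X : Type*} [MetricSpace X]

theorem dist_le_dist_sum_range_dist (p : ℕ → X) (i j : ℕ) :
    dist (p i) (p j) ≤ dist (∑ k ∈ Finset.range i, dist (p k) (p (k + 1)))
      (∑ k ∈ Finset.range j, dist (p k) (p (k + 1))) := by
  wlog hij : i ≤ j generalizing i j
  · rw [dist_comm, dist_comm (Finset.sum _ _)]
    exact this j i (le_of_not_ge hij)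
  rw [dist_comm (Finset.sum _ _), Real.dist_eq, ← Finset.sum_Ico_eq_sub _ hij]
  exact (dist_le_Ico_sum_dist p hij).trans (le_abs_self _)

theorem uIcc_subset_cthickening_of_lipschitzWith {f : X → ℝ} {C : ℝ≥0}
    (hf : LipschitzWith C f) {x y : X} {s : ℝ} {A : Set ℝ} (hx : f x ∈ A) (hxy : C * dist x y ≤ s) :
    uIcc (f x) (f y) ⊆ cthickening s A := fun v hv =>
  mem_cthickening_of_dist_le v (f x) s A hx <| by
    rw [dist_comm]
    exact (Real.dist_left_le_of_mem_uIcc hv).trans ((hf.dist_le_mul x y).trans hxy)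

theorem Purely1Unrectifiable.exists_abs_sub_le_sum_long_steps [CompactSpace X]
    (hX : Purely1Unrectifiable X) {f : X → ℝ} {C : ℝ≥0} (hf : LipschitzWith C f) (L : ℝ) {ε : ℝ}
    (hε : 0 < ε) :
    ∃ d > 0, ∀ (N : ℕ) (p : ℕ → X), ∑ i ∈ Finset.range N, dist (p i) (p (i + 1)) ≤ L →
      |f (p N) - f (p 0)| ≤
        ε + C * ∑ i ∈ Finset.range N with d ≤ dist (p i) (p (i + 1)), dist (p i) (p (i + 1)) := by
  obtain ⟨s, hs, hthick⟩ := hX.exists_volume_cthickening_range_lt hf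
    (isCompact_Icc (a := 0) (b := L)) (ENNReal.ofReal_pos.2 hε)
  refine ⟨s / (C + 1), by positivity, fun N p hL => ?_⟩
  set long := (Finset.range N).filter fun i => s / (C + 1) ≤ dist (p i) (p (i + 1))
  let visited : Set ℝ := range (f ∘ fun i : Fin (N + 1) => p i)
  have hvisited {i : ℕ} (hi : i ≤ N) : f (p i) ∈ visited := ⟨⟨i, Nat.lt_succ_of_le hi⟩, rfl⟩
  have hsmall : volume (cthickening s visited) ≤ ENNReal.ofReal ε := by
    refine (hthick _ (fun i : Fin (N + 1) => ∑ k ∈ Finset.range i, dist (p k) (p (k + 1)))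
      _ (fun i => ⟨by positivity, hL.trans' ?_⟩) fun i j => dist_le_dist_sum_range_dist p i j).le
    exact Finset.sum_le_sum_of_subset_of_nonneg (Finset.range_mono (by lia))
      fun _ _ _ => dist_nonneg
  have hcover : uIcc (f (p 0)) (f (p N)) ⊆
      cthickening s visited ∪ ⋃ i ∈ long, uIcc (f (p i)) (f (p (i + 1))) := by
    refine (uIcc_subset_insert_biUnion_uIcc (f ∘ p) N).trans (insert_subset
      (Or.inl (self_subset_cthickening _ (hvisited (Nat.zero_le N))))
      (iUnion₂_subset fun i hi => ?_))
    by_cases hlong : s / (C + 1) ≤ dist (p i) (p (i + 1))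
    · exact subset_union_of_subset_right
        (subset_biUnion_of_mem (u := fun i => uIcc (f (p i)) (f (p (i + 1))))
          (Finset.mem_coe.2 (Finset.mem_filter.2 ⟨hi, hlong⟩))) _
    · refine (uIcc_subset_cthickening_of_lipschitzWith hf
        (hvisited (Finset.mem_range.1 hi).le) ?_).trans subset_union_left
      rw [not_le, lt_div_iff₀ (by positivity)] at hlong
      linarith [dist_nonneg (x := p i) (y := p (i + 1))]
  rw [← ENNReal.ofReal_le_ofReal_iff (by positivity)]
  calc ENNReal.ofReal |f (p N) - f (p 0)| = volume (uIcc (f (p 0)) (f (p N))) :=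
        Real.volume_interval.symm
    _ ≤ volume (cthickening s visited) + ∑ i ∈ long, volume (uIcc (f (p i)) (f (p (i + 1)))) :=
        (measure_mono hcover).trans <| (measure_union_le _ _).trans <| by
          gcongr; exact measure_biUnion_finset_le _ _
    _ ≤ ENNReal.ofReal ε + ∑ i ∈ long, ENNReal.ofReal (C * dist (p i) (p (i + 1))) := by
        gcongr with i
        rw [Real.volume_interval, ← Real.dist_eq, dist_comm]
        exact ENNReal.ofReal_le_ofReal (hf.dist_le_mul _ _)
    _ = ENNReal.ofReal (ε + C * ∑ i ∈ long, dist (p i) (p (i + 1))) := by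
        rw [ENNReal.ofReal_add hε.le (by positivity), Finset.mul_sum,
          ENNReal.ofReal_sum_of_nonneg fun i _ => by positivity]
end

/-! ### Approximation by functions of small local slope -/

section
open scoped NNReal

/-- The envelope is the infimum of `f (p N) + ∑ c (p i) (p (i + 1))` over all chains `p` starting
at the given point. -/
theorem exists_chain_envelope {X : Type*} (c : X → X → ℝ) (f : X → ℝ) {ε : ℝ}
    (hf : ∀ (N : ℕ) (p : ℕ → X),
      f (p 0) - ε ≤ f (p N) + ∑ i ∈ Finset.range N, c (p i) (p (i + 1))) :
    ∃ g : X → ℝ, (∀ x, f x - ε ≤ g x) ∧ g ≤ f ∧ ∀ x y, g x ≤ c x y + g y := by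
  let V : X → Set ℝ := fun x => {v | ∃ (N : ℕ) (p : ℕ → X), p 0 = x ∧
    v = f (p N) + ∑ i ∈ Finset.range N, c (p i) (p (i + 1))}
  have hlower : ∀ x, f x - ε ∈ lowerBounds (V x) := by
    rintro _ _ ⟨N, p, rfl, rfl⟩
    exact hf N p
  have hmem : ∀ x, f x ∈ V x := fun x => ⟨0, fun _ => x, rfl, by simp⟩
  refine ⟨fun x => sInf (V x), fun x => le_csInf ⟨_, hmem x⟩ (hlower x),
    fun x => csInf_le ⟨_, hlower x⟩ (hmem x), fun x y => ?_⟩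
  rw [← sub_le_iff_le_add']
  refine le_csInf ⟨_, hmem y⟩ ?_
  rintro _ ⟨N, p, rfl, rfl⟩
  rw [sub_le_iff_le_add']
  refine csInf_le ⟨_, hlower x⟩ ⟨N + 1, fun i => Nat.casesOn i x p, rfl, ?_⟩
  rw [Finset.sum_range_succ']
  exact (add_comm _ _).trans (add_assoc _ _ _)

/-- `f` is `η`-Lipschitz at scales below `d`. Functions with small `η` are almost locally constant;
they are the building blocks of the weakly unconditionally Cauchy series used to test
`(V*)`-sets. -/
def LipschitzBelowScale {X : Type*} [PseudoMetricSpace X] (η d : ℝ) (f : X → ℝ) : Prop :=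
  ∀ x y, dist x y < d → |f x - f y| ≤ η * dist x y

theorem LipschitzBelowScale.mono {X : Type*} [PseudoMetricSpace X] {η η' d : ℝ} {f : X → ℝ}
    (hf : LipschitzBelowScale η d f) (hη : η ≤ η') : LipschitzBelowScale η' d f :=
  fun x y hxy => (hf x y hxy).trans (by gcongr)

section
variable {X : Type*} [MetricSpace X] [CompactSpace X]

/-- Chains longer than `C * diam X / η` cost more than the oscillation of `f`; the shorter ones pay
for the variation of `f` with their long steps. -/
theorem Purely1Unrectifiable.exists_le_add_sum_cost (hX : Purely1Unrectifiable X) {f : X → ℝ}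
    {C : ℝ≥0} (hf : LipschitzWith C f) {η ε : ℝ} (hη : 0 < η) (hε : 0 < ε) :
    ∃ d > 0, ∀ c : X → X → ℝ, (∀ x y, η * dist x y ≤ c x y) →
      (∀ x y, d ≤ dist x y → C * dist x y ≤ c x y) → ∀ (N : ℕ) (p : ℕ → X),
        f (p 0) - ε ≤ f (p N) + ∑ i ∈ Finset.range N, c (p i) (p (i + 1)) := by
  obtain ⟨d, hd, hlong⟩ :=
    hX.exists_abs_sub_le_sum_long_steps hf (C * diam (univ : Set X) / η) hε
  refine ⟨d, hd, fun c hcη hcC N p => ?_⟩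
  have habs : f (p 0) - f (p N) ≤ |f (p N) - f (p 0)| := by
    rw [abs_sub_comm]; exact le_abs_self _
  by_cases hlen : ∑ i ∈ Finset.range N, dist (p i) (p (i + 1)) ≤ C * diam (univ : Set X) / η
  · have hcost : C * ∑ i ∈ Finset.range N with d ≤ dist (p i) (p (i + 1)),
        dist (p i) (p (i + 1)) ≤ ∑ i ∈ Finset.range N, c (p i) (p (i + 1)) := by
      rw [Finset.mul_sum, Finset.sum_filter]
      refine Finset.sum_le_sum fun i _ => ?_
      split_ifs with h
      · exact hcC _ _ h
      · exact (by positivity : 0 ≤ η * dist (p i) (p (i + 1))).trans (hcη _ _)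
    linarith [hlong N p hlen]
  · have hcost : η * ∑ i ∈ Finset.range N, dist (p i) (p (i + 1)) ≤
        ∑ i ∈ Finset.range N, c (p i) (p (i + 1)) := by
      rw [Finset.mul_sum]
      exact Finset.sum_le_sum fun i _ => hcη _ _
    rw [not_le, div_lt_iff₀' hη] at hlen
    have hends : |f (p N) - f (p 0)| ≤ C * diam (univ : Set X) :=
      (hf.dist_le_mul _ _).trans (by
        gcongr; exact dist_le_diam_of_mem isCompact_univ.isBounded trivial trivial)
    linarith

/-- The approximation is the chain envelope of `f` for the cost `η * dist` on steps shorter than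
`d` and `C * dist` on the longer ones. -/
theorem Purely1Unrectifiable.exists_lipschitzBelowScale_approx (hX : Purely1Unrectifiable X)
    {f : X → ℝ} {C : ℝ≥0} (hf : LipschitzWith C f) {η ε : ℝ} (hη : 0 < η) (hηC : η ≤ C)
    (hε : 0 < ε) :
    ∃ d > 0, ∃ g : X → ℝ, LipschitzWith C g ∧ LipschitzBelowScale η d g ∧
      ∀ x, |f x - g x| ≤ ε := by
  obtain ⟨d, hd, hchain⟩ := hX.exists_le_add_sum_cost hf hη hε
  let c : X → X → ℝ := fun x y => if dist x y < d then η * dist x y else C * dist x y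
  have c_le (x y : X) : c x y ≤ C * dist x y := by
    dsimp only [c]; split_ifs <;> gcongr
  have le_c (x y : X) : η * dist x y ≤ c x y := by
    dsimp only [c]; split_ifs <;> gcongr
  obtain ⟨g, hfg, hgf, hg⟩ := exists_chain_envelope c f
    (hchain c le_c fun x y hxy => (if_neg hxy.not_gt).ge)
  have hg_abs (x y : X) : |g x - g y| ≤ c x y := by
    have hsymm : c y x = c x y := by simp only [c, dist_comm]
    exact abs_le.2 ⟨by linarith [hg y x], by linarith [hg x y]⟩
  refine ⟨d, hd, g, .of_dist_le_mul fun x y => (hg_abs x y).trans (c_le x y), fun x y hxy => ?_,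
    fun x => abs_le.2 ⟨by linarith [hgf x], by linarith [hfg x]⟩⟩
  simpa only [c, if_pos hxy] using hg_abs x y
end
end

/-! ### Truncations -/

section
open scoped NNReal

/-- Truncation of the real number `a` at height `b`. -/
def clip (b a : ℝ) : ℝ := max (-b) (min b a)

theorem clip_eq_self {a b : ℝ} (h : |a| ≤ b) : clip b a = a := by
  rw [clip, min_eq_right (abs_le.1 h).2, max_eq_right (abs_le.1 h).1]

theorem abs_clip_le {b : ℝ} (hb : 0 ≤ b) (a : ℝ) : |clip b a| ≤ b :=
  abs_le.2 ⟨le_max_left _ _, max_le (by linarith) (min_le_left _ _)⟩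

theorem abs_clip_le_abs {b : ℝ} (hb : 0 ≤ b) (a : ℝ) : |clip b a| ≤ |a| := by
  unfold clip; grind

theorem abs_sub_clip_le_abs {b : ℝ} (hb : 0 ≤ b) (a : ℝ) : |a - clip b a| ≤ |a| := by
  unfold clip; grind

theorem abs_clip_sub_clip_le (b b' a a' : ℝ) :
    |clip b a - clip b' a'| ≤ max |b - b'| |a - a'| :=
  (abs_max_sub_max_le_max _ _ _ _).trans <|
    max_le (by rw [neg_sub_neg, abs_sub_comm]; exact le_max_left _ _)
      (abs_min_sub_min_le_max _ _ _ _)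

section
variable {X : Type*} [PseudoMetricSpace X] {B d : ℝ} {S : Set X}

/-- Truncation of `f` at a height that equals `B` on `S` and decreases to `0` with slope `B / d`
outside of `S`. Unlike the product with a cutoff function, it does not increase Lipschitz constants
by an additive error. -/
def truncate (B : ℝ) (hd : 0 < d) (S : Set X) (f : X → ℝ) (x : X) : ℝ :=
  clip (B * thickenedIndicator hd S x) (f x)

variable (hB : 0 ≤ B) (hd : 0 < d) (f : X → ℝ)

theorem truncate_eq_self {x : X} (hx : x ∈ S) (hfx : |f x| ≤ B) : truncate B hd S f x = f x :=
  clip_eq_self (by rwa [thickenedIndicator_one hd S hx, NNReal.coe_one, mul_one])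

theorem truncate_eq_zero {x : X} (hx : x ∉ thickening d S) : truncate B hd S f x = 0 := by
  simpa [truncate, thickenedIndicator_zero hd S hx] using abs_clip_le le_rfl (f x)

include hB

theorem abs_truncate_le (S : Set X) (x : X) : |truncate B hd S f x| ≤ B :=
  (abs_clip_le (by positivity) _).trans
    (mul_le_of_le_one_right hB (thickenedIndicator_le_one hd S x))

theorem abs_truncate_le_abs (S : Set X) (x : X) : |truncate B hd S f x| ≤ |f x| :=
  abs_clip_le_abs (by positivity) _

theorem abs_sub_truncate_le_abs (S : Set X) (x : X) : |f x - truncate B hd S f x| ≤ |f x| :=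
  abs_sub_clip_le_abs (by positivity) _

theorem abs_mul_thickenedIndicator_sub_le (S : Set X) (x y : X) :
    |B * thickenedIndicator hd S x - B * thickenedIndicator hd S y| ≤ B / d * dist x y := by
  have hlip := (lipschitzWith_thickenedIndicator hd S).dist_le_mul x y
  rw [NNReal.dist_eq, NNReal.coe_inv, Real.coe_toNNReal d hd.le] at hlip
  rw [← mul_sub, abs_mul, abs_of_nonneg hB, div_eq_mul_inv, mul_assoc]
  gcongr

theorem abs_truncate_sub_truncate_le (S : Set X) (x y : X) :
    |truncate B hd S f x - truncate B hd S f y| ≤ max (B / d * dist x y) |f x - f y| :=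
  (abs_clip_sub_clip_le _ _ _ _).trans <|
    max_le_max_right _ (abs_mul_thickenedIndicator_sub_le hB hd S x y)

theorem abs_truncate_sub_truncate_le_of_notMem {x : X} (hx : x ∉ thickening d S) (y : X) :
    |truncate B hd S f x - truncate B hd S f y| ≤ B / d * dist x y := by
  have hxy := (le_abs_self _).trans (abs_mul_thickenedIndicator_sub_le hB hd S y x)
  rw [thickenedIndicator_zero hd S hx, NNReal.coe_zero, mul_zero, sub_zero] at hxy
  rw [truncate_eq_zero hd f hx, zero_sub, abs_neg, dist_comm]
  exact (abs_clip_le (by positivity) _).trans hxy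

end

theorem exists_finset_forall_abs_apply_le {F ι : Type*} [SeminormedAddCommGroup F]
    [NormedSpace ℝ F] {v : ι → F} (hv : Dense (Submodule.span ℝ (range v) : Set F)) (γ : F)
    {C ε : ℝ} (hC : 0 ≤ C) (hε : 0 < ε) :
    ∃ E : Finset ι, ∃ e > 0, ∀ φ : F →L[ℝ] ℝ, ‖φ‖ ≤ C → (∀ i ∈ E, |φ (v i)| ≤ e) → |φ γ| ≤ ε := by
  obtain ⟨w, hw, hγw⟩ := hv.exists_dist_lt γ (show 0 < ε / (2 * (C + 1)) by positivity)
  obtain ⟨c, rfl⟩ := Finsupp.mem_span_range_iff_exists_finsupp.1 hw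
  set A := ∑ i ∈ c.support, |c i|
  have hA : 0 ≤ A := Finset.sum_nonneg fun _ _ => abs_nonneg _
  refine ⟨c.support, ε / (2 * (A + 1)), by positivity, fun φ hφ hφE => ?_⟩
  have hfar : |φ (γ - c.sum fun i a => a • v i)| ≤ ε / 2 := by
    rw [dist_eq_norm] at hγw
    calc _ ≤ C * (ε / (2 * (C + 1))) := φ.le_of_opNorm_le_of_le hφ hγw.le
      _ ≤ ε / 2 := by rw [mul_div_assoc', div_le_div_iff₀ (by positivity) two_pos]; nlinarith
  have hnear : |φ (c.sum fun i a => a • v i)| ≤ ε / 2 := by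
    calc _ ≤ ∑ i ∈ c.support, |c i| * |φ (v i)| := by
          simpa only [Finsupp.sum, map_sum, map_smul, smul_eq_mul, abs_mul] using
            Finset.abs_sum_le_sum_abs (fun i => c i * φ (v i)) c.support
      _ ≤ A * (ε / (2 * (A + 1))) := by
          rw [Finset.sum_mul]
          exact Finset.sum_le_sum fun i hi => by gcongr; exact hφE i hi
      _ ≤ ε / 2 := by rw [mul_div_assoc', div_le_div_iff₀ (by positivity) two_pos]; nlinarith
  rw [map_sub] at hfar
  linarith [abs_sub_abs_le_abs_sub (φ γ) (φ (c.sum fun i a => a • v i))]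

end

/-! ### WUC series of functionals on free spaces -/

section
variable {Y : Type*} [SeminormedAddCommGroup Y] [NormedSpace ℝ Y]

theorem isWUC_of_norm_sum_smul_le {y : ℕ → Y} {C : ℝ}
    (h : ∀ (N : ℕ) (s : ℕ → ℝ), (∀ k, |s k| ≤ 1) → ‖∑ k ∈ Finset.range N, s k • y k‖ ≤ C) :
    IsWUC y := by
  intro Φ
  refine summable_of_sum_range_le (c := ‖Φ‖ * C) (fun _ => abs_nonneg _) fun N => ?_
  have hsign : ∀ a : ℝ, |((SignType.sign a : SignType) : ℝ)| ≤ 1 := fun a => by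
    rcases lt_trichotomy a 0 with ha | ha | ha <;> simp [ha]
  calc ∑ k ∈ Finset.range N, |Φ (y k)|
      = Φ (∑ k ∈ Finset.range N, (SignType.sign (Φ (y k)) : ℝ) • y k) := by
        simp only [map_sum, map_smul, smul_eq_mul, sign_mul_self]
    _ ≤ ‖Φ‖ * C := (le_abs_self _).trans <|
        Φ.le_of_opNorm_le_of_le le_rfl (h N _ fun k => hsign (Φ (y k)))

theorem isWUC_of_summable_norm {y : ℕ → Y} (hy : Summable fun n => ‖y n‖) : IsWUC y :=
  fun Φ => (hy.mul_left ‖Φ‖).of_nonneg_of_le (fun _ => abs_nonneg _) fun n => Φ.le_opNorm (y n)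

end

theorem IsVStarSet.isBounded {X : Type*} [NormedAddCommGroup X] [NormedSpace ℝ X] {Γ : Set X}
    (hΓ : IsVStarSet Γ) : Bornology.IsBounded Γ := by
  by_contra hunbdd
  have hlarge (n : ℕ) : ∃ γ ∈ Γ, (2 : ℝ) ^ n < ‖γ‖ := by
    by_contra! hle
    exact hunbdd (isBounded_iff_forall_norm_le.2 ⟨_, hle⟩)
  choose γ hγ hlt using hlarge
  choose φ hφ hφγ using fun n => exists_dual_vector'' ℝ (γ n)
  have hwuc : IsWUC fun n => (1 / 2 : ℝ) ^ n • φ n := by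
    refine isWUC_of_summable_norm (summable_geometric_two.of_nonneg_of_le
      (fun _ => norm_nonneg _) fun n => ?_)
    rw [norm_smul, Real.norm_of_nonneg (by positivity)]
    exact mul_le_of_le_one_right (by positivity) (hφ n)
  obtain ⟨n, hn⟩ := (hΓ _ hwuc (1 / 2) (by norm_num)).exists
  refine (hn (γ n) (hγ n)).not_gt ?_
  calc (1 / 2 : ℝ) < (1 / 2) ^ n * 2 ^ n := by rw [← mul_pow]; norm_num
    _ ≤ (1 / 2) ^ n * ‖γ n‖ := by gcongr; exact (hlt n).le
    _ = |((1 / 2 : ℝ) ^ n • φ n) (γ n)| := by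
        rw [_root_.smul_apply, hφγ, smul_eq_mul, RCLike.ofReal_real_eq_id, id,
          abs_of_nonneg (by positivity)]

theorem sum_range_indicator_sdiff_le_one {α : Type*} {T : ℕ → Set α} (hT : Monotone T) (N : ℕ)
    (x : α) : ∑ k ∈ Finset.range N, (T (k + 1) \ T k).indicator (1 : α → ℝ) x ≤ 1 := by
  simp only [fun k : ℕ => indicator_sdiff (hT k.le_succ) (1 : α → ℝ), Pi.sub_apply,
    Finset.sum_range_sub fun k => (T k).indicator (1 : α → ℝ) x]
  exact (sub_le_self _ (indicator_nonneg (fun _ _ => zero_le_one) x)).trans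
    (indicator_le_self' (fun _ _ => zero_le_one) x)

section
variable {M : Type*} [MetricSpace M] {o : M} {F : Type*} [NormedAddCommGroup F] [NormedSpace ℝ F]
  {δ : M → F} (hδ : IsLipschitzFree o δ)
include hδ

namespace IsLipschitzFree

theorem abs_sub_le {φ : F →L[ℝ] ℝ} {C : ℝ} (hφ : ‖φ‖ ≤ C) (x y : M) :
    |φ (δ x) - φ (δ y)| ≤ C * dist x y := by
  rw [← map_sub, ← hδ.isometry.dist_eq, dist_eq_norm]
  exact φ.le_of_opNorm_le hφ _

theorem abs_le {φ : F →L[ℝ] ℝ} {C : ℝ} (hφ : ‖φ‖ ≤ C) (x : M) : |φ (δ x)| ≤ C * dist x o := by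
  simpa [hδ.map_base] using hδ.abs_sub_le hφ x o

theorem exists_lift {f : M → ℝ} {C : ℝ} (hC : 0 ≤ C) (hf : ∀ x y, |f x - f y| ≤ C * dist x y)
    (hfo : f o = 0) : ∃ φ : F →L[ℝ] ℝ, ‖φ‖ ≤ C ∧ ∀ x, φ (δ x) = f x :=
  hδ.lift ⟨C, hC⟩ f (LipschitzWith.of_dist_le_mul hf) hfo

theorem ext_s1 {φ ψ : F →L[ℝ] ℝ} (h : ∀ x, φ (δ x) = ψ (δ x)) : φ = ψ :=
  ContinuousLinearMap.ext_on hδ.dense_span (forall_mem_range.2 h)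

theorem norm_le {φ : F →L[ℝ] ℝ} {C : ℝ} (hC : 0 ≤ C)
    (hφ : ∀ x y, |φ (δ x) - φ (δ y)| ≤ C * dist x y) : ‖φ‖ ≤ C := by
  obtain ⟨ψ, hψ, hψφ⟩ := hδ.exists_lift hC hφ (by rw [hδ.map_base, map_zero])
  rwa [← hδ.ext_s1 hψφ]

theorem exists_truncate (φ : F →L[ℝ] ℝ) {B d : ℝ} (hB : 0 ≤ B) (hd : 0 < d) (S : Set M) :
    ∃ ψ : F →L[ℝ] ℝ, ‖ψ‖ ≤ max ‖φ‖ (B / d) ∧ ∀ x, ψ (δ x) = truncate B hd S (φ ∘ δ) x := by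
  refine hδ.exists_lift (le_max_of_le_left (norm_nonneg φ)) (fun x y => ?_) ?_
  · refine (abs_truncate_sub_truncate_le hB hd _ S x y).trans (max_le ?_ ?_)
    · gcongr; exact le_max_right _ _
    · exact hδ.abs_sub_le (le_max_left _ _) x y
  · exact abs_nonpos_iff.1 <|
      (abs_truncate_le_abs hB hd _ S o).trans (by simp [hδ.map_base])

theorem isWUC_of_sum_abs_sub_le {φ : ℕ → F →L[ℝ] ℝ} {C : ℝ} (hC : 0 ≤ C)
    (h : ∀ N x y, ∑ k ∈ Finset.range N, |φ k (δ x) - φ k (δ y)| ≤ C * dist x y) : IsWUC φ := by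
  refine isWUC_of_norm_sum_smul_le (C := C) fun N s hs => hδ.norm_le hC fun x y => ?_
  rw [← map_sub, _root_.sum_apply]
  refine (Finset.abs_sum_le_sum_abs _ _).trans ((Finset.sum_le_sum fun k _ => ?_).trans (h N x y))
  rw [_root_.smul_apply, smul_eq_mul, abs_mul, map_sub]
  exact mul_le_of_le_one_left (abs_nonneg _) (hs k)

theorem isWUC_of_eq_zero {φ : ℕ → F →L[ℝ] ℝ} {T : ℕ → Set M} (hT : Monotone T) {C : ℝ}
    (hφ : ∀ k, ‖φ k‖ ≤ C) (hin : ∀ k, ∀ x ∈ T k, φ k (δ x) = 0)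
    (hout : ∀ k, ∀ x ∉ T (k + 1), φ k (δ x) = 0) : IsWUC φ := by
  have hC : 0 ≤ C := (norm_nonneg _).trans (hφ 0)
  let ind (k : ℕ) : M → ℝ := (T (k + 1) \ T k).indicator 1
  have hind (k : ℕ) (x : M) : 0 ≤ ind k x := indicator_nonneg (fun _ _ => zero_le_one) x
  have hzero (k : ℕ) {x : M} (hx : x ∉ T (k + 1) \ T k) : φ k (δ x) = 0 :=
    (not_and_or.1 hx).elim (hout k x) fun hx => hin k x (not_not.1 hx)
  have hpair (k : ℕ) (x y : M) :
      |φ k (δ x) - φ k (δ y)| ≤ C * dist x y * (ind k x + ind k y) := by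
    by_cases hxy : x ∈ T (k + 1) \ T k ∨ y ∈ T (k + 1) \ T k
    · refine (hδ.abs_sub_le (hφ k) x y).trans (le_mul_of_one_le_right (by positivity) ?_)
      rcases hxy with hx | hy
      · exact (indicator_of_mem hx 1).ge.trans (le_add_of_nonneg_right (hind k y))
      · exact (indicator_of_mem hy 1).ge.trans (le_add_of_nonneg_left (hind k x))
    · rw [not_or] at hxy
      rw [hzero k hxy.1, hzero k hxy.2, sub_zero, abs_zero]
      exact mul_nonneg (by positivity) (add_nonneg (hind k x) (hind k y))
  refine hδ.isWUC_of_sum_abs_sub_le (C := C * 2) (by positivity) fun N x y => ?_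
  calc ∑ k ∈ Finset.range N, |φ k (δ x) - φ k (δ y)|
      ≤ ∑ k ∈ Finset.range N, C * dist x y * (ind k x + ind k y) :=
        Finset.sum_le_sum fun k _ => hpair k x y
    _ = C * dist x y * (∑ k ∈ Finset.range N, ind k x + ∑ k ∈ Finset.range N, ind k y) := by
        rw [← Finset.mul_sum, Finset.sum_add_distrib]
    _ ≤ C * dist x y * (1 + 1) := by
        gcongr <;> exact sum_range_indicator_sdiff_le_one hT N _
    _ = C * 2 * dist x y := by ring

/-- Given `x` and `y`, the functionals with `dist x y < s (k + 1)` or `s k ≤ dist x y` contribute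
geometrically small increments, and at most one `k` satisfies neither condition. -/
theorem isWUC_of_lipschitzBelowScale {φ : ℕ → F →L[ℝ] ℝ} {s : ℕ → ℝ} (hs : Antitone s) {C : ℝ}
    (hφ : ∀ k, ‖φ k‖ ≤ C) (hsmall : ∀ k x, |φ k (δ x)| ≤ (1 / 2) ^ k * s k)
    (hflat : ∀ k, LipschitzBelowScale ((1 / 2) ^ k) (s (k + 1)) (φ k ∘ δ)) : IsWUC φ := by
  have hC : 0 ≤ C := (norm_nonneg _).trans (hφ 0)
  let ind (k : ℕ) : ℝ → ℝ := (Ici (s (k + 1)) \ Ici (s k)).indicator 1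
  have hind (k : ℕ) (t : ℝ) : 0 ≤ ind k t := indicator_nonneg (fun _ _ => zero_le_one) t
  have hpair (k : ℕ) (x y : M) : |φ k (δ x) - φ k (δ y)| ≤
      2 * dist x y * (1 / 2) ^ k + C * dist x y * ind k (dist x y) := by
    have hgeom : 0 ≤ dist x y * (1 / 2) ^ k := by positivity
    have hmid : 0 ≤ C * dist x y * ind k (dist x y) := mul_nonneg (by positivity) (hind k _)
    rcases lt_or_ge (dist x y) (s (k + 1)) with hlt | hge
    · have := hflat k x y hlt
      simp only [Function.comp_apply] at this
      linarith
    rcases lt_or_ge (dist x y) (s k) with hlt | hge'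
    · rw [show ind k (dist x y) = 1 from indicator_of_mem (mem_sdiff_of_mem hge hlt.not_ge) 1]
      linarith [hδ.abs_sub_le (hφ k) x y]
    · have := mul_le_mul_of_nonneg_left hge' (by positivity : (0 : ℝ) ≤ (1 / 2) ^ k)
      linarith [abs_sub (φ k (δ x)) (φ k (δ y)), hsmall k x, hsmall k y]
  refine hδ.isWUC_of_sum_abs_sub_le (C := 4 + C) (by positivity) fun N x y => ?_
  calc ∑ k ∈ Finset.range N, |φ k (δ x) - φ k (δ y)|
      ≤ ∑ k ∈ Finset.range N,
          (2 * dist x y * (1 / 2) ^ k + C * dist x y * ind k (dist x y)) :=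
        Finset.sum_le_sum fun k _ => hpair k x y
    _ = 2 * dist x y * ∑ k ∈ Finset.range N, (1 / 2) ^ k +
          C * dist x y * ∑ k ∈ Finset.range N, ind k (dist x y) := by
        rw [Finset.sum_add_distrib, ← Finset.mul_sum, ← Finset.mul_sum]
    _ ≤ 2 * dist x y * 2 + C * dist x y * 1 := by
        gcongr
        · exact sum_geometric_two_le N
        · exact sum_range_indicator_sdiff_le_one
            (fun _ _ hkl => Ici_subset_Ici.2 (hs hkl)) N _
    _ = (4 + C) * dist x y := by ring

end IsLipschitzFree

end

/-! ### Gliding humps -/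

section
variable {M : Type*} [MetricSpace M] {o : M} {F : Type*} [NormedAddCommGroup F] [NormedSpace ℝ F]
  {δ : M → F} (hδ : IsLipschitzFree o δ) {Γ : Set F} (hΓ : IsVStarSet Γ)
include hδ hΓ

namespace IsVStarSet

theorem exists_abs_le_of_lipschitzBelowScale (C : ℝ) {ε : ℝ} (hε : 0 < ε) :
    ∃ τ > 0, ∃ η > 0, ∀ φ : F →L[ℝ] ℝ, ∀ d > 0, ‖φ‖ ≤ C → (∀ x, |φ (δ x)| ≤ τ) →
      LipschitzBelowScale η d (φ ∘ δ) → ∀ γ ∈ Γ, |φ γ| ≤ ε := by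
  by_contra! hflat
  choose Φ D hD hnorm hsmall hscale hbad using fun (k : ℕ) (s : {s : ℝ // 0 < s}) =>
    hflat ((1 / 2) ^ k * s) (mul_pos (by positivity) s.2) ((1 / 2) ^ k) (by positivity)
  let s : ℕ → {s : ℝ // 0 < s} :=
    fun k => k.rec ⟨1, one_pos⟩ fun k s => ⟨min s (D k s), lt_min s.2 (hD k s)⟩
  have hs : Antitone fun k => (s k).1 := antitone_nat_of_succ_le fun k => min_le_left _ _
  have hwuc : IsWUC fun k => Φ k (s k) :=
    hδ.isWUC_of_lipschitzBelowScale hs (fun k => hnorm k (s k)) (fun k => hsmall k (s k))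
      fun k x y hxy => hscale k (s k) x y (hxy.trans_le (min_le_right _ _))
  obtain ⟨k, hk⟩ := (hΓ _ hwuc ε hε).exists
  obtain ⟨γ, hγ, hlt⟩ := hbad k (s k)
  exact (hk γ hγ).not_gt hlt

section
variable {ι : Type*} [Preorder ι] [Nonempty ι] {S : ι → Set M} (hS : Monotone S)
include hS

theorem exists_abs_le_of_eq_zero (C : ℝ) {ε : ℝ} (hε : 0 < ε) :
    ∃ i, ∀ j ≥ i, ∀ φ : F →L[ℝ] ℝ, ‖φ‖ ≤ C → (∀ x ∈ S i, φ (δ x) = 0) →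
      (∀ x ∉ S j, φ (δ x) = 0) → ∀ γ ∈ Γ, |φ γ| ≤ ε := by
  by_contra! hhump
  choose J hJ Φ hnorm hin hout hbad using hhump
  let i : ℕ → ι := fun k => J^[k] (Classical.arbitrary ι)
  have hi (k : ℕ) : i (k + 1) = J (i k) := Function.iterate_succ_apply' J k _
  have hwuc : IsWUC fun k => Φ (i k) := by
    refine hδ.isWUC_of_eq_zero (T := S ∘ i) (hS.comp (monotone_nat_of_le_succ fun k => ?_))
      (fun k => hnorm (i k)) (fun k => hin (i k)) fun k x hx => hout (i k) x ?_
    · rw [hi]; exact hJ (i k)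
    · rwa [Function.comp_apply, hi] at hx
  obtain ⟨k, hk⟩ := (hΓ _ hwuc ε hε).exists
  obtain ⟨γ, hγ, hlt⟩ := hbad (i k)
  exact (hk γ hγ).not_gt hlt

/-- By density of the span of `δ`, agreement on a suitable finite set makes `ψ γ` close to `φ γ`. -/
theorem exists_abs_le_of_forall_exists_agree [IsDirectedOrder ι] {A : Set (F →L[ℝ] ℝ)} {C : ℝ}
    (hA : ∀ φ ∈ A, ‖φ‖ ≤ C)
    (happrox : ∀ φ ∈ A, ∀ E : Finset M, ∃ ψ : F →L[ℝ] ℝ, ‖ψ‖ ≤ C ∧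
      (∀ x ∈ E, ψ (δ x) = φ (δ x)) ∧ (∀ x, |ψ (δ x)| ≤ |φ (δ x)|) ∧
      ∃ j, ∀ x ∉ S j, ψ (δ x) = 0)
    {ε : ℝ} (hε : 0 < ε) :
    ∃ i, ∀ φ ∈ A, (∀ x ∈ S i, φ (δ x) = 0) → ∀ γ ∈ Γ, |φ γ| ≤ ε := by
  obtain ⟨i, hi⟩ := hΓ.exists_abs_le_of_eq_zero hδ hS C (half_pos hε)
  refine ⟨i, fun φ hφ hφi γ hγ => ?_⟩
  have hC : 0 ≤ C := (norm_nonneg φ).trans (hA φ hφ)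
  obtain ⟨E, e, he, hE⟩ := exists_finset_forall_abs_apply_le hδ.dense_span γ
    (add_nonneg hC hC) (half_pos hε)
  obtain ⟨ψ, hψ, hψE, hψφ, j, hj⟩ := happrox φ hφ E
  obtain ⟨l, hil, hjl⟩ := exists_ge_ge i j
  have hψi (x : M) (hx : x ∈ S i) : ψ (δ x) = 0 := by
    simpa [hφi x hx] using hψφ x
  have hψγ := hi l hil ψ hψ hψi (fun x hx => hj x fun hxj => hx (hS hjl hxj)) γ hγ
  have hdiff : |(φ - ψ) γ| ≤ ε / 2 :=
    hE _ ((norm_sub_le φ ψ).trans (add_le_add (hA φ hφ) hψ)) fun x hx => by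
      rw [_root_.sub_apply, hψE x hx, sub_self, abs_zero]
      exact he.le
  rw [_root_.sub_apply] at hdiff
  linarith [abs_sub_abs_le_abs_sub (φ γ) (ψ γ)]

end

theorem exists_closedBall_abs_le (C : ℝ) {ε : ℝ} (hε : 0 < ε) :
    ∃ R : ℝ, ∀ φ : F →L[ℝ] ℝ, ‖φ‖ ≤ C → (∀ x ∈ closedBall o R, φ (δ x) = 0) →
      ∀ γ ∈ Γ, |φ γ| ≤ ε := by
  refine hΓ.exists_abs_le_of_forall_exists_agree hδ (S := closedBall o)
    (A := {φ | ‖φ‖ ≤ C}) (fun _ _ h => closedBall_subset_closedBall h) (fun _ h => h)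
    (fun φ hφ E => ?_) hε
  have hC : 0 ≤ C := (norm_nonneg φ).trans hφ
  obtain ⟨R, hR, hER⟩ := E.finite_toSet.isBounded.subset_closedBall_lt 0 o
  obtain ⟨ψ, hψ, hψφ⟩ := hδ.exists_truncate φ (mul_nonneg hC hR.le) hR (closedBall o R)
  rw [mul_div_cancel_right₀ C hR.ne'] at hψ
  refine ⟨ψ, hψ.trans (max_le hφ le_rfl), fun x hx => ?_, fun x => ?_, R + R, fun x hx => ?_⟩
  · have hxR := hER hx
    rw [hψφ, truncate_eq_self hR _ hxR, Function.comp_apply]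
    exact (hδ.abs_le hφ x).trans (mul_le_mul_of_nonneg_left hxR hC)
  · rw [hψφ]; exact abs_truncate_le_abs (mul_nonneg hC hR.le) hR _ _ x
  · rw [hψφ, truncate_eq_zero hR]
    intro hx'
    obtain ⟨z, hz, hxz⟩ := mem_thickening_iff.1 hx'
    exact hx ((dist_triangle x z o).trans (add_le_add hxz.le hz))

theorem exists_finset_thickening_abs_le (C : ℝ) {B d ε : ℝ} (hB : 0 ≤ B) (hd : 0 < d)
    (hε : 0 < ε) :
    ∃ E : Finset M, ∀ φ : F →L[ℝ] ℝ, ‖φ‖ ≤ C → (∀ x, |φ (δ x)| ≤ B) →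
      (∀ x ∈ thickening d (E : Set M), φ (δ x) = 0) → ∀ γ ∈ Γ, |φ γ| ≤ ε := by
  classical
  suffices ∃ E : Finset M, ∀ φ ∈ {φ : F →L[ℝ] ℝ | ‖φ‖ ≤ C ∧ ∀ x, |φ (δ x)| ≤ B},
      (∀ x ∈ thickening d (E : Set M), φ (δ x) = 0) → ∀ γ ∈ Γ, |φ γ| ≤ ε by
    simpa only [mem_ofPred_eq, and_imp] using this
  refine hΓ.exists_abs_le_of_forall_exists_agree hδ (C := max C (B / d))
    (S := fun E : Finset M => thickening d (E : Set M))
    (fun _ _ h => thickening_subset_of_subset d (Finset.coe_subset.2 h))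
    (fun φ hφ => le_max_of_le_left hφ.1) (fun φ hφ E => ?_) hε
  obtain ⟨ψ, hψ, hψφ⟩ := hδ.exists_truncate φ hB hd (E : Set M)
  refine ⟨ψ, hψ.trans (max_le_max_right _ hφ.1), fun x hx => ?_, fun x => ?_, E, fun x hx => ?_⟩
  · rw [hψφ, truncate_eq_self hd _ hx (hφ.2 x), Function.comp_apply]
  · rw [hψφ]; exact abs_truncate_le_abs hB hd _ _ x
  · rw [hψφ, truncate_eq_zero hd _ hx]

end IsVStarSet

end

section
variable {M : Type*} [MetricSpace M] {o : M} {F : Type*} [NormedAddCommGroup F] [NormedSpace ℝ F]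
  {δ : M → F} (hδ : IsLipschitzFree o δ) {Γ : Set F} (hΓ : IsVStarSet Γ)
include hδ hΓ

namespace IsVStarSet

theorem exists_bounded_approx {C ε : ℝ} (hC : 0 ≤ C) (hε : 0 < ε) :
    ∃ B ≥ 0, ∀ φ : F →L[ℝ] ℝ, ‖φ‖ ≤ C → ∃ ψ : F →L[ℝ] ℝ, ‖ψ‖ ≤ C ∧ (∀ x, |ψ (δ x)| ≤ B) ∧
      (∀ x, |ψ (δ x)| ≤ |φ (δ x)|) ∧ ∀ γ ∈ Γ, |φ γ - ψ γ| ≤ ε := by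
  obtain ⟨R', hR'⟩ := hΓ.exists_closedBall_abs_le hδ (C + C) hε
  set R := max R' 1
  have hR : 0 < R := one_pos.trans_le (le_max_right _ _)
  have hCR : 0 ≤ C * R := mul_nonneg hC hR.le
  refine ⟨C * R, hCR, fun φ hφ => ?_⟩
  obtain ⟨ψ, hψ, hψφ⟩ := hδ.exists_truncate φ hCR hR (closedBall o R)
  rw [mul_div_cancel_right₀ C hR.ne'] at hψ
  have hψC : ‖ψ‖ ≤ C := hψ.trans (max_le hφ le_rfl)
  refine ⟨ψ, hψC, fun x => ?_, fun x => ?_,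
    hR' (φ - ψ) ((norm_sub_le φ ψ).trans (add_le_add hφ hψC)) fun x hx => ?_⟩
  · rw [hψφ]; exact abs_truncate_le hCR hR _ _ x
  · rw [hψφ]; exact abs_truncate_le_abs hCR hR _ _ x
  · have hxR : x ∈ closedBall o R := closedBall_subset_closedBall (le_max_left _ _) hx
    have hφx : |φ (δ x)| ≤ C * R :=
      (hδ.abs_le hφ x).trans (mul_le_mul_of_nonneg_left hxR hC)
    rw [_root_.sub_apply, hψφ, truncate_eq_self hR _ hxR hφx, Function.comp_apply, sub_self]

theorem exists_finset_approx {B C d ε : ℝ} (hB : 0 ≤ B) (hd : 0 < d) (hε : 0 < ε) :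
    ∃ E : Finset M, ∀ φ : F →L[ℝ] ℝ, ‖φ‖ ≤ C → (∀ x, |φ (δ x)| ≤ B) →
      ∃ ψ : F →L[ℝ] ℝ, ‖ψ‖ ≤ max C (B / d) ∧ (∀ x, |ψ (δ x)| ≤ |φ (δ x)|) ∧
        (∀ x ∉ thickening (2 * d) (E : Set M), ψ (δ x) = 0) ∧ ∀ γ ∈ Γ, |φ γ - ψ γ| ≤ ε := by
  obtain ⟨E, hE⟩ := hΓ.exists_finset_thickening_abs_le hδ (C + max C (B / d)) hB hd hε
  refine ⟨E, fun φ hφ hφB => ?_⟩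
  obtain ⟨ψ, hψ, hψφ⟩ := hδ.exists_truncate φ hB hd (thickening d (E : Set M))
  have hψC : ‖ψ‖ ≤ max C (B / d) := hψ.trans (max_le_max_right _ hφ)
  refine ⟨ψ, hψC, fun x => ?_, fun x hx => ?_,
    hE (φ - ψ) ((norm_sub_le φ ψ).trans (add_le_add hφ hψC)) (fun x => ?_) fun x hx => ?_⟩
  · rw [hψφ]; exact abs_truncate_le_abs hB hd _ _ x
  · rw [hψφ, truncate_eq_zero hd]
    exact fun hx' => hx (by rw [two_mul]; exact thickening_thickening_subset d d _ hx')
  · rw [_root_.sub_apply, hψφ]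
    exact (abs_sub_truncate_le_abs hB hd (φ ∘ δ) _ x).trans (hφB x)
  · rw [_root_.sub_apply, hψφ, truncate_eq_self hd _ hx (hφB x), Function.comp_apply, sub_self]

/-- The `k`-th truncation has slope `B * 2 ^ k`; the set `E k` is chosen for functionals of the norm
which this allows. -/
theorem exists_seq_finset_approx {B C ε : ℝ} (hB : 0 ≤ B) (hC : 0 ≤ C) (hε : 0 < ε) :
    ∃ E : ℕ → Finset M, ∀ n, ∀ φ : F →L[ℝ] ℝ, ‖φ‖ ≤ C → (∀ x, |φ (δ x)| ≤ B) →
      ∃ ψ : F →L[ℝ] ℝ, ‖ψ‖ ≤ C + B * 2 ^ n ∧ (∀ x, |ψ (δ x)| ≤ |φ (δ x)|) ∧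
        (∀ k < n, ∀ x ∉ thickening (2 * (1 / 2) ^ k) (E k : Set M), ψ (δ x) = 0) ∧
        ∀ γ ∈ Γ, |φ γ - ψ γ| ≤ ε * (1 - (1 / 2) ^ n) := by
  choose E hE using fun k : ℕ => hΓ.exists_finset_approx hδ (C := C + B * 2 ^ k)
    (d := (1 / 2) ^ k) (ε := ε * (1 / 2) ^ (k + 1)) hB (by positivity) (by positivity)
  refine ⟨E, fun n φ hφ hφB => ?_⟩
  induction n with
  | zero => exact ⟨φ, by linarith, fun _ => le_rfl, by simp, by simp⟩
  | succ n ih =>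
    obtain ⟨ψ, hψ, hψφ, hψE, hψγ⟩ := ih
    obtain ⟨ψ', hψ', hψ'ψ, hψ'E, hψ'γ⟩ := hE n ψ hψ fun x => (hψφ x).trans (hφB x)
    refine ⟨ψ', hψ'.trans (max_le ?_ ?_), fun x => (hψ'ψ x).trans (hψφ x), fun k hk x hx => ?_,
      fun γ hγ => ?_⟩
    · gcongr
      · norm_num
      · exact n.le_succ
    · rw [one_div, inv_pow, div_inv_eq_mul, pow_succ]
      nlinarith [mul_nonneg hB (by positivity : (0 : ℝ) ≤ 2 ^ n)]
    · rcases (Nat.lt_succ_iff_lt_or_eq.1 hk) with hkn | rfl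
      · simpa [hψE k hkn x hx] using hψ'ψ x
      · exact hψ'E x hx
    · calc |φ γ - ψ' γ| ≤ |φ γ - ψ γ| + |ψ γ - ψ' γ| := abs_sub_le _ _ _
        _ ≤ ε * (1 - (1 / 2) ^ n) + ε * (1 / 2) ^ (n + 1) := add_le_add (hψγ γ hγ) (hψ'γ γ hγ)
        _ = ε * (1 - (1 / 2) ^ (n + 1)) := by ring

theorem exists_seq_finset_abs_le {C ε : ℝ} (hC : 0 ≤ C) (hε : 0 < ε) :
    ∃ E : ℕ → Finset M, ∀ n, ∀ φ : F →L[ℝ] ℝ, ‖φ‖ ≤ C →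
      (∀ x, (∀ k < n, x ∈ thickening (2 * (1 / 2) ^ k) (E k : Set M)) → φ (δ x) = 0) →
      ∀ γ ∈ Γ, |φ γ| ≤ ε := by
  obtain ⟨B, hB, hbounded⟩ := hΓ.exists_bounded_approx hδ hC (half_pos hε)
  obtain ⟨E, hE⟩ := hΓ.exists_seq_finset_approx hδ hB hC (half_pos hε)
  refine ⟨E, fun n φ hφ hφE γ hγ => ?_⟩
  obtain ⟨ψ, hψ, hψB, hψφ, hψγ⟩ := hbounded φ hφ
  obtain ⟨ψ', -, hψ'ψ, hψ'E, hψ'γ⟩ := hE n ψ hψ hψB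
  have hψ' : ψ' = 0 := hδ.ext_s1 fun x => by
    by_cases hx : ∀ k < n, x ∈ thickening (2 * (1 / 2) ^ k) (E k : Set M)
    · simpa [hφE x hx] using (hψ'ψ x).trans (hψφ x)
    · push Not at hx
      obtain ⟨k, hk, hxk⟩ := hx
      exact hψ'E k hk x hxk
  have hψsmall := hψ'γ γ hγ
  rw [hψ', _root_.zero_apply, sub_zero] at hψsmall
  calc |φ γ| ≤ |φ γ - ψ γ| + |ψ γ| := by linarith [abs_sub_abs_le_abs_sub (φ γ) (ψ γ)]
    _ ≤ ε / 2 + ε / 2 * (1 - (1 / 2) ^ n) := add_le_add (hψγ γ hγ) hψsmall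
    _ ≤ ε := by nlinarith [(by positivity : (0 : ℝ) ≤ (1 / 2) ^ n)]

end IsVStarSet

end

/-- A Kuratowski-type lemma: the measure of noncompactness of `U n` tends to zero. -/
theorem exists_isCompact_forall_isOpen {X : Type*} [PseudoMetricSpace X] [CompleteSpace X]
    {U : ℕ → Set X} (hU : Antitone U)
    (hcov : ∀ ε > 0, ∃ n, ∃ E : Set X, E.Finite ∧ U n ⊆ thickening ε E) :
    ∃ K, IsCompact K ∧ ∀ V, IsOpen V → K ⊆ V → ∃ n, U n ⊆ V := by
  let K := ⋂ n, closure (U n)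
  have hK : IsClosed K := isClosed_iInter fun n => isClosed_closure
  refine ⟨K, ?_, fun V hV hKV => ?_⟩
  · refine (totallyBounded_iff.2 fun ε hε => ?_).isCompact_of_isClosed hK
    obtain ⟨n, E, hE, hUE⟩ := hcov (ε / 2) (half_pos hε)
    refine ⟨E, hE, ?_⟩
    rw [← thickening_eq_biUnion_ball]
    calc K ⊆ closure (U n) := iInter_subset _ n
      _ ⊆ cthickening (ε / 2) E := closure_minimal
          (hUE.trans (thickening_subset_cthickening _ _)) isClosed_cthickening
      _ ⊆ thickening ε E := cthickening_subset_thickening' hε (half_lt_self hε) E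
  · by_contra! hV'
    choose x hxU hxV using fun n => not_subset.1 (hV' n)
    have htb : TotallyBounded (range x) := totallyBounded_iff.2 fun ε hε => by
      obtain ⟨n, E, hE, hUE⟩ := hcov ε hε
      refine ⟨x '' Iio n ∪ E, ((finite_Iio n).image x).union hE, ?_⟩
      rw [← thickening_eq_biUnion_ball, thickening_union]
      rintro _ ⟨k, rfl⟩
      rcases lt_or_ge k n with hk | hk
      · exact Or.inl (self_subset_thickening hε _ (mem_image_of_mem x hk))
      · exact Or.inr (hUE (hU hk (hxU k)))
    obtain ⟨a, -, σ, hσ, hlim⟩ :=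
      (htb.closure.isCompact_of_isClosed isClosed_closure).tendsto_subseq
        fun k => subset_closure (mem_range_self k)
    have haK : a ∈ K := mem_iInter.2 fun n => mem_closure_of_tendsto hlim <|
      (eventually_ge_atTop n).mono fun k hk => hU (hk.trans hσ.le_apply) (hxU (σ k))
    obtain ⟨k, hk⟩ := (hlim.eventually (hV.mem_nhds (hKV haK))).exists
    exact hxV (σ k) hk

theorem IsVStarSet.exists_isCompact_abs_le {M : Type*} [MetricSpace M] [CompleteSpace M] {o : M}
    {F : Type*} [NormedAddCommGroup F] [NormedSpace ℝ F] {δ : M → F} (hδ : IsLipschitzFree o δ)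
    {Γ : Set F} (hΓ : IsVStarSet Γ) {C ε : ℝ} (hC : 0 ≤ C) (hε : 0 < ε) :
    ∃ K : Set M, IsCompact K ∧ ∀ γ ∈ Γ, ∃ e > 0, ∀ φ : F →L[ℝ] ℝ, ‖φ‖ ≤ C →
      (∀ x ∈ K, |φ (δ x)| ≤ e) → |φ γ| ≤ ε := by
  obtain ⟨E, hE⟩ := hΓ.exists_seq_finset_abs_le hδ
    (C := C + max C 1) (by positivity) (half_pos hε)
  let U : ℕ → Set M := fun n => {x | ∀ k < n, x ∈ thickening (2 * (1 / 2) ^ k) (E k : Set M)}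
  have hcov : ∀ r > 0, ∃ n, ∃ S : Set M, S.Finite ∧ U n ⊆ thickening r S := fun r hr => by
    obtain ⟨k, hk⟩ := exists_pow_lt_of_lt_one (half_pos hr) (one_half_lt_one (α := ℝ))
    exact ⟨k + 1, E k, (E k).finite_toSet, fun x hx =>
      thickening_mono (by linarith) _ (hx k k.lt_succ_self)⟩
  have hU : Antitone U := fun m n hmn x hx k hk => hx k (hk.trans_le hmn)
  obtain ⟨K, hK, hKU⟩ := exists_isCompact_forall_isOpen hU hcov
  refine ⟨K, hK, fun γ hγ => ?_⟩
  obtain ⟨S, e', he', hS⟩ := exists_finset_forall_abs_apply_le hδ.dense_span γ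
    (C := max C 1) (by positivity) (half_pos hε)
  set e := min e' 1
  have he : 0 < e := lt_min he' one_pos
  refine ⟨e / 2, half_pos he, fun φ hφ hφK => ?_⟩
  obtain ⟨n, hn⟩ := hKU {x | |φ (δ x)| < e}
    (isOpen_lt (φ.continuous.comp hδ.isometry.continuous).abs continuous_const)
    fun x hx => (hφK x hx).trans_lt (half_lt_self he)
  obtain ⟨ψ, hψ, hψφ⟩ := hδ.exists_truncate φ he.le one_pos univ
  have hψC : ‖ψ‖ ≤ max C 1 :=
    hψ.trans (max_le_max hφ (by rw [div_one]; exact min_le_right _ _))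
  have hψγ : |ψ γ| ≤ ε / 2 := hS ψ hψC fun x _ => by
    rw [hψφ]
    exact (abs_truncate_le he.le one_pos _ _ x).trans (min_le_left _ _)
  have hdiff : |(φ - ψ) γ| ≤ ε / 2 :=
    hE n _ ((norm_sub_le φ ψ).trans (add_le_add hφ hψC)) (fun x hx => by
      rw [_root_.sub_apply, hψφ, truncate_eq_self one_pos _ (mem_univ x) (hn hx).le,
        Function.comp_apply, sub_self]) γ hγ
  rw [_root_.sub_apply] at hdiff
  linarith [abs_sub_abs_le_abs_sub (φ γ) (ψ γ)]

/-! ### Total boundedness -/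

theorem exists_mem_norm_sub_lt {X : Type*} [SeminormedAddCommGroup X] [NormedSpace ℝ X]
    (V : Submodule ℝ X) {γ : X} {ε ε' : ℝ} (hε : ε < ε')
    (hγ : ∀ φ : X →L[ℝ] ℝ, ‖φ‖ ≤ 1 → (∀ v ∈ V, φ v = 0) → |φ γ| ≤ ε) :
    ∃ v ∈ V, ‖γ - v‖ < ε' := by
  obtain ⟨g, hg, hgγ⟩ := exists_dual_vector'' ℝ (Submodule.Quotient.mk γ : X ⧸ V)
  have hmk : ‖(Submodule.Quotient.mk γ : X ⧸ V)‖ ≤ ε := by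
    have hle := hγ (g ∘L V.mkQL) ?_ fun v hv => ?_
    · rw [← abs_norm]
      exact (congrArg abs hgγ).symm.le.trans hle
    · exact ContinuousLinearMap.opNorm_le_bound _ zero_le_one fun x =>
        g.le_of_opNorm_le_of_le hg (Submodule.Quotient.norm_mk_le V x)
    · exact (congrArg g ((Submodule.Quotient.mk_eq_zero V).2 hv)).trans (map_zero g)
  obtain ⟨m, hm, hlt⟩ :=
    Submodule.Quotient.norm_mk_lt (Submodule.Quotient.mk γ : X ⧸ V) (sub_pos.2 hε)
  exact ⟨γ - m, (Submodule.Quotient.eq V).1 hm.symm, by rw [sub_sub_cancel]; linarith⟩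

theorem totallyBounded_of_forall_abs_le {X : Type*} [NormedAddCommGroup X] [NormedSpace ℝ X]
    {Γ : Set X} (hΓ : Bornology.IsBounded Γ)
    (h : ∀ ε > 0, ∃ P : Set X, P.Finite ∧ ∀ φ : X →L[ℝ] ℝ, ‖φ‖ ≤ 1 → (∀ p ∈ P, φ p = 0) →
      ∀ γ ∈ Γ, |φ γ| ≤ ε) : TotallyBounded Γ := by
  obtain ⟨R, hR⟩ := isBounded_iff_forall_norm_le.1 hΓ
  refine totallyBounded_iff.2 fun ε hε => ?_
  obtain ⟨P, hP, hPΓ⟩ := h (ε / 4) (by positivity)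
  let V : Submodule ℝ X := Submodule.span ℝ P
  have : FiniteDimensional ℝ V := FiniteDimensional.span_of_finite ℝ hP
  have : ProperSpace V := FiniteDimensional.proper_real V
  have hball : IsCompact ((↑) '' closedBall (0 : V) (R + ε / 2) : Set X) :=
    (isCompact_closedBall _ _).image continuous_subtype_val
  obtain ⟨t, ht, hcov⟩ := totallyBounded_iff.1 hball.totallyBounded (ε / 2) (half_pos hε)
  refine ⟨t, ht, fun γ hγ => ?_⟩
  obtain ⟨v, hv, hγv⟩ := exists_mem_norm_sub_lt V (by linarith : ε / 4 < ε / 2) fun φ hφ hφV =>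
    hPΓ φ hφ (fun p hp => hφV p (Submodule.subset_span hp)) γ hγ
  have hvR : ‖v‖ ≤ R + ε / 2 := by
    linarith [norm_sub_norm_le v γ, norm_sub_rev v γ, hR γ hγ]
  obtain ⟨y, hy, hvy⟩ := mem_iUnion₂.1 (hcov ⟨⟨v, hv⟩, by simpa using hvR, rfl⟩)
  rw [← dist_eq_norm] at hγv
  refine mem_iUnion₂.2 ⟨y, hy, ?_⟩
  rw [mem_ball] at hvy ⊢
  linarith [dist_triangle γ v y]

theorem relWeaklyCompact_of_totallyBounded {X : Type*} [NormedAddCommGroup X] [NormedSpace ℝ X]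
    [CompleteSpace X] {Γ : Set X} (hΓ : TotallyBounded Γ) : RelWeaklyCompact Γ :=
  ((hΓ.closure.isCompact_of_isClosed isClosed_closure).image
    (toWeakSpaceCLM ℝ X).continuous).closure_of_subset (image_mono subset_closure)

/-! ### Flat approximation -/

section
open scoped NNReal
variable {M : Type*} [MetricSpace M]

theorem exists_lipschitzWith_extend_subtype {S : Set M} {g : S → ℝ} {C : ℝ≥0}
    (hg : LipschitzWith C g) : ∃ G : M → ℝ, LipschitzWith C G ∧ ∀ x : S, G x = g x := by
  have hext (x : S) : Function.extend Subtype.val g 0 x = g x :=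
    Subtype.val_injective.extend_apply g 0 x
  obtain ⟨G, hG, heq⟩ := (show LipschitzOnWith C (Function.extend Subtype.val g 0) S from
    fun x hx y hy => by
      rw [hext ⟨x, hx⟩, hext ⟨y, hy⟩]; exact hg ⟨x, hx⟩ ⟨y, hy⟩).extend_real
  exact ⟨G, hG, fun x => (heq x.2).symm.trans (hext x)⟩

section
variable {ρ B : ℝ} {K : Set M} (hB : 0 ≤ B) (hρ : 0 < ρ)
include hB

theorem lipschitzWith_truncate {C : ℝ≥0} (hBC : B ≤ C * ρ) {g : M → ℝ}
    (hg : LipschitzWith C g) : LipschitzWith C (truncate B hρ K g) :=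
  LipschitzWith.of_dist_le_mul fun x y =>
    (abs_truncate_sub_truncate_le hB hρ g K x y).trans <|
      max_le (by gcongr; rwa [div_le_iff₀ hρ]) (hg.dist_le_mul x y)

theorem lipschitzBelowScale_truncate {η d : ℝ} (hBη : B ≤ η * ρ) {g : M → ℝ}
    (hg : LipschitzBelowScale η d ((cthickening ρ K).domRestrict g)) :
    LipschitzBelowScale η d (truncate B hρ K g) := by
  have hslope (x y : M) : B / ρ * dist x y ≤ η * dist x y := by
    gcongr
    rwa [div_le_iff₀ hρ]
  intro x y hxy
  by_cases hx : x ∈ thickening ρ K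
  · by_cases hy : y ∈ thickening ρ K
    · have hxy' := hg ⟨x, thickening_subset_cthickening _ _ hx⟩
        ⟨y, thickening_subset_cthickening _ _ hy⟩ hxy
      exact (abs_truncate_sub_truncate_le hB hρ g K x y).trans (max_le (hslope x y) hxy')
    · rw [abs_sub_comm, dist_comm]
      exact (abs_truncate_sub_truncate_le_of_notMem hB hρ g hy x).trans (hslope y x)
  · exact (abs_truncate_sub_truncate_le_of_notMem hB hρ g hx y).trans (hslope x y)

end

end

section
variable {M : Type*} [MetricSpace M]

/-- Approximation on a compact neighbourhood of `K`, followed by a truncation of slope at most `η`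
which only takes effect away from `K`. -/
theorem Purely1Unrectifiable.exists_small_lipschitzBelowScale_approx [LocallyCompactSpace M]
    (hM : Purely1Unrectifiable M) {K : Set M} (hK : IsCompact K) {τ η : ℝ} (hτ : 0 < τ)
    (hη : 0 < η) (hη1 : η ≤ 1) :
    ∃ b > 0, ∀ f : M → ℝ, LipschitzWith 1 f → (∀ x ∈ K, |f x| ≤ b) → ∀ e > 0,
      ∃ g : M → ℝ, ∃ d > 0, LipschitzWith 1 g ∧ LipschitzBelowScale η d g ∧ (∀ x, |g x| ≤ τ) ∧
        ∀ x ∈ K, |f x - g x| ≤ e := by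
  obtain ⟨ρ, hρ, hcpt⟩ := hK.exists_isCompact_cthickening
  have : CompactSpace (cthickening ρ K) := isCompact_iff_compactSpace.1 hcpt
  set B := min τ (η * ρ)
  have hB : 0 < B := lt_min hτ (mul_pos hη hρ)
  refine ⟨B / 2, half_pos hB, fun f hf hfK e he => ?_⟩
  obtain ⟨d, hd, g, hg, hgd, hfg⟩ :=
    (hM.subtype (cthickening ρ K)).exists_lipschitzBelowScale_approx
      (f := (cthickening ρ K).domRestrict f) (C := 1) (fun x y => hf x y) hη
      (by rwa [NNReal.coe_one]) (lt_min he (half_pos hB))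
  obtain ⟨G, hG, hGg⟩ := exists_lipschitzWith_extend_subtype hg
  obtain rfl : (cthickening ρ K).domRestrict G = g := funext hGg
  refine ⟨truncate B hρ K G, d, hd, lipschitzWith_truncate hB.le hρ ?_ hG,
    lipschitzBelowScale_truncate hB.le hρ (min_le_right _ _) hgd,
    fun x => (abs_truncate_le hB.le hρ G K x).trans (min_le_left _ _), fun x hx => ?_⟩
  · rw [NNReal.coe_one]
    exact (min_le_right _ _).trans (by gcongr)
  · have hfG : |f x - G x| ≤ min e (B / 2) := hfg ⟨x, self_subset_cthickening K hx⟩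
    have hGx : |G x| ≤ B := by
      linarith [hfK x hx, hfG.trans (min_le_right _ _), abs_sub_abs_le_abs_sub (G x) (f x),
        abs_sub_comm (G x) (f x)]
    rw [truncate_eq_self hρ G hx hGx]
    exact hfG.trans (min_le_left _ _)

variable {o : M} {F : Type*} [NormedAddCommGroup F] [NormedSpace ℝ F] {δ : M → F}

theorem IsLipschitzFree.exists_finite_abs_le (hδ : IsLipschitzFree o δ) {K : Set M}
    (hK : IsCompact K) {b : ℝ} (hb : 0 < b) :
    ∃ P : Set M, P.Finite ∧ ∀ φ : F →L[ℝ] ℝ, ‖φ‖ ≤ 1 → (∀ p ∈ P, φ (δ p) = 0) →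
      ∀ x ∈ K, |φ (δ x)| ≤ b := by
  obtain ⟨P, hP, hKP⟩ := totallyBounded_iff.1 hK.totallyBounded b hb
  refine ⟨P, hP, fun φ hφ hφP x hx => ?_⟩
  obtain ⟨p, hp, hxp⟩ := mem_iUnion₂.1 (hKP hx)
  have := hδ.abs_sub_le hφ x p
  rw [hφP p hp, sub_zero, one_mul] at this
  exact this.trans hxp.le

theorem IsLipschitzFree.exists_flat_approx [LocallyCompactSpace M] (hδ : IsLipschitzFree o δ)
    (hM : Purely1Unrectifiable M) {K : Set M} (hK : IsCompact K) {τ η : ℝ} (hτ : 0 < τ)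
    (hη : 0 < η) :
    ∃ P : Set M, P.Finite ∧ ∀ φ : F →L[ℝ] ℝ, ‖φ‖ ≤ 1 → (∀ p ∈ P, φ (δ p) = 0) → ∀ e > 0,
      ∃ ψ : F →L[ℝ] ℝ, ∃ d > 0, ‖ψ‖ ≤ 1 ∧ LipschitzBelowScale η d (ψ ∘ δ) ∧
        (∀ x, |ψ (δ x)| ≤ τ) ∧ ∀ x ∈ K, |φ (δ x) - ψ (δ x)| ≤ e := by
  obtain ⟨b, hb, happrox⟩ := hM.exists_small_lipschitzBelowScale_approx (hK.insert o)
    (half_pos hτ) (lt_min hη one_pos) (min_le_right η 1)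
  obtain ⟨P, hP, hPb⟩ := hδ.exists_finite_abs_le (F := F) (hK.insert o) hb
  refine ⟨P, hP, fun φ hφ hφP e he => ?_⟩
  have hlip : LipschitzWith 1 (φ ∘ δ) := .of_dist_le_mul fun x y => hδ.abs_sub_le hφ x y
  obtain ⟨g, d, hd, hg, hgd, hgτ, hφg⟩ := happrox _ hlip (hPb φ hφ hφP) (e / 2) (half_pos he)
  obtain ⟨ψ, hψ, hψg⟩ := hδ.exists_lift (f := fun x => g x - g o) zero_le_one
    (fun x y => by simpa [Real.dist_eq] using hg.dist_le_mul x y) (sub_self _)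
  have hgo : |g o| ≤ e / 2 := by
    simpa [hδ.map_base] using hφg o (mem_insert o K)
  refine ⟨ψ, d, hd, hψ, fun x y hxy => ?_, fun x => ?_, fun x hx => ?_⟩
  · simpa only [Function.comp_apply, hψg, sub_sub_sub_cancel_right] using
      hgd.mono (min_le_left η 1) x y hxy
  · rw [hψg]
    linarith [abs_sub (g x) (g o), hgτ x, hgτ o]
  · have hgx : |φ (δ x) - g x| ≤ e / 2 := hφg x (mem_insert_of_mem o hx)
    rw [hψg, sub_sub_eq_add_sub, add_sub_right_comm]
    linarith [abs_add_le (φ (δ x) - g x) (g o)]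

end

theorem propertyVStar_of_locallyCompact_purely1Unrectifiable_general
    {M : Type*} [MetricSpace M] [CompleteSpace M] [LocallyCompactSpace M]
    (hM : Purely1Unrectifiable M) {o : M}
    {F : Type*} [NormedAddCommGroup F] [NormedSpace ℝ F]
    {δ : M → F} (hδ : IsLipschitzFree o δ) {Γ : Set F} (hΓ : IsVStarSet Γ) :
    TotallyBounded Γ := by
  refine totallyBounded_of_forall_abs_le hΓ.isBounded fun ε hε => ?_
  obtain ⟨K, hK, hKΓ⟩ := hΓ.exists_isCompact_abs_le hδ zero_le_two (half_pos hε)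
  obtain ⟨τ, hτ, η, hη, hflat⟩ :=
    hΓ.exists_abs_le_of_lipschitzBelowScale hδ 1 (half_pos hε)
  obtain ⟨P, hP, happrox⟩ := hδ.exists_flat_approx hM hK hτ hη
  refine ⟨δ '' P, hP.image δ, fun φ hφ hφP γ hγ => ?_⟩
  obtain ⟨e, he, hγK⟩ := hKΓ γ hγ
  obtain ⟨ψ, d, hd, hψ, hψd, hψτ, hφψ⟩ := happrox φ hφ (forall_mem_image.1 hφP) e he
  have hdiff : |(φ - ψ) γ| ≤ ε / 2 :=
    hγK (φ - ψ) ((norm_sub_le φ ψ).trans (by linarith)) fun x hx => hφψ x hx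
  have hψγ : |ψ γ| ≤ ε / 2 := hflat ψ d hd hψ hψτ hψd γ hγ
  rw [_root_.sub_apply] at hdiff
  linarith [abs_sub_abs_le_abs_sub (φ γ) (ψ γ)]

/-- If `M` is a complete, locally compact, purely 1-unrectifiable pointed metric space,
then the Lipschitz-free space `F(M)` has property (V*). -/
theorem propertyVStar_of_locallyCompact_purely1Unrectifiable
    {M : Type*} [MetricSpace M] [CompleteSpace M] [LocallyCompactSpace M]
    (hM : Purely1Unrectifiable M) (o : M)
    {F : Type*} [NormedAddCommGroup F] [NormedSpace ℝ F] [CompleteSpace F]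
    (δ : M → F) (hδ : IsLipschitzFree o δ) :
    HasPropertyVStar F :=
  fun _ hΓ => relWeaklyCompact_of_totallyBounded
    (propertyVStar_of_locallyCompact_purely1Unrectifiable_general hM hδ hΓ)
end
end
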